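/- arXiv:1912.08328 — 2 statements merged into one kernel-verified Lean document; each statement's English description precedes it below -/
import Mathlib

section
/- Let G and H be graphs and r ≥ 2 an integer such that G →_r H. Then there exist constants a = a(G,H,r) > 0 and b = b(H,r) > 1, where b does not depend on G, such that for every positive integer t, the blowup Ramsey number satisfies B_r(G → H; t) ≤ a · b^t. -/
/-- The `n`-blowup of a graph: each vertex is replaced by an independent set of `n` vertices,
and each edge by a complete bipartite graph between the corresponding sets. -/
def blowupGraph {V : Type} (G : SimpleGraph V) (n : ℕ) : SimpleGraph (V × Fin n) :=
  SimpleGraph.comap Prod.fst G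

/-- The coloring `C` admits a monochromatic copy of `H` in `G`. -/
def HasMonoCopy {V α : Type} (G : SimpleGraph V) (H : SimpleGraph α) {r : ℕ}
    (C : Sym2 V → Fin r) : Prop :=
  ∃ (f : α → V) (c : Fin r), Function.Injective f ∧
    ∀ a b, H.Adj a b → G.Adj (f a) (f b) ∧ C s(f a, f b) = c

/-- `G →_r H`: every `r`-coloring of the edges of `G` contains a monochromatic copy of `H`. -/
def ArrowsFor {V α : Type} (G : SimpleGraph V) (H : SimpleGraph α) (r : ℕ) : Prop :=
  ∀ C : Sym2 V → Fin r, HasMonoCopy G H C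

/-- The coloring `C` of `G[n]` admits a monochromatic canonical copy of `H[t]`:
an embedding `φ` of `H` into `G`, together with `t` blowup vertices `ψ a` in the part indexed
by `φ a` for each vertex `a` of `H`, all of whose blowup edges receive the same color `c`. -/
def HasMonoCanonicalBlowup {V α : Type} (G : SimpleGraph V) (H : SimpleGraph α)
    (n t r : ℕ) (C : Sym2 (V × Fin n) → Fin r) : Prop :=
  ∃ (φ : α → V) (ψ : α → Fin t → Fin n) (c : Fin r),
    Function.Injective φ ∧ (∀ a, Function.Injective (ψ a)) ∧
    ∀ a b, H.Adj a b → G.Adj (φ a) (φ b) ∧ ∀ i j, C s((φ a, ψ a i), (φ b, ψ b j)) = c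

/-- Every `r`-coloring of the edges of `G[n]` contains a monochromatic canonical copy of `H[t]`.
The blowup Ramsey number `B_r(G → H; t)` is the minimum such `n`. -/
def BlowupArrow {V α : Type} (G : SimpleGraph V) (H : SimpleGraph α) (r n t : ℕ) : Prop :=
  ∀ C : Sym2 (V × Fin n) → Fin r, HasMonoCanonicalBlowup G H n t r C

section Aux

open Finset

/-- Bipartite Kővári–Sós–Turán style lemma. -/
lemma aux_kst (D t m : ℕ) (hD : 0 < D) (hm : m = 4 * D * t) {A : Type} (T : Finset A)
    (rel : Fin m → A → Prop) [∀ s, DecidablePred (rel s)]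
    (h : ∀ s, T.card ≤ 2 * D * (T.filter (rel s)).card)
    (hT : 4 * D * (t * 2 ^ m) ≤ T.card) :
    ∃ (f : Fin t → Fin m) (g : Fin t → A), Function.Injective f ∧
      Function.Injective g ∧ (∀ s, g s ∈ T) ∧ ∀ s s', rel (f s) (g s') := by
  classical
  rcases Nat.eq_zero_or_pos t with rfl | ht
  · exact ⟨fun s => s.elim0, fun s => s.elim0, fun s => s.elim0, fun s => s.elim0,
      fun s => s.elim0, fun s => s.elim0⟩
  let S : A → Finset (Fin m) := fun v => univ.filter (fun s => rel s v)
  set good := T.filter (fun v => t ≤ (S v).card) with hgood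
  have hdouble : ∑ v ∈ T, (S v).card = ∑ s : Fin m, (T.filter (rel s)).card := by
    have := Finset.sum_card_bipartiteAbove_eq_sum_card_bipartiteBelow
      (s := (univ : Finset (Fin m))) (t := T) (fun s v => rel s v)
    simpa [Finset.bipartiteAbove, Finset.bipartiteBelow, S] using this.symm
  have h1 : m * T.card ≤ 2 * D * ∑ v ∈ T, (S v).card := by
    rw [hdouble, Finset.mul_sum]
    calc m * T.card = ∑ s : Fin m, T.card := by simp
      _ ≤ _ := Finset.sum_le_sum (fun s _ => h s)
  have h2 : ∑ v ∈ T, (S v).card ≤ good.card * m + T.card * t := by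
    calc ∑ v ∈ T, (S v).card ≤ ∑ v ∈ T, ((if t ≤ (S v).card then m else 0) + t) := by
          apply Finset.sum_le_sum
          intro v _
          have : (S v).card ≤ m := by
            simpa using Finset.card_le_univ (S v)
          split_ifs <;> omega
      _ = _ := by
          rw [Finset.sum_add_distrib, ← Finset.sum_filter]
          simp [hgood]
  have h3 : T.card ≤ 4 * D * good.card := by
    have h4 : m * T.card ≤ 2 * D * (good.card * m + T.card * t) :=
      h1.trans (Nat.mul_le_mul_left _ h2)
    have h5 : (2 * D * t) * T.card ≤ (2 * D * t) * (4 * D * good.card) := by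
      rw [hm] at h4
      nlinarith
    exact Nat.le_of_mul_le_mul_left h5 (by positivity)
  have h6 : t * 2 ^ m ≤ good.card := by
    have := hT.trans h3
    exact Nat.le_of_mul_le_mul_left this (by positivity)
  obtain ⟨S0, -, hS0⟩ := Finset.exists_le_card_fiber_of_mul_le_card_of_maps_to
    (s := good) (t := (univ : Finset (Finset (Fin m)))) (f := S) (n := t)
    (fun _ _ => mem_univ _) ⟨∅, mem_univ _⟩ (by simpa [mul_comm] using h6)
  set F := good.filter (fun v => S v = S0) with hF
  have hS0c : t ≤ S0.card := by
    have : F.Nonempty := by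
      rw [← Finset.card_pos]; omega
    obtain ⟨v, hv⟩ := this
    simp only [hF, hgood, mem_filter] at hv
    rw [← hv.2]; exact hv.1.2
  obtain ⟨F', hF', hFc⟩ := Finset.exists_subset_card_eq hS0
  obtain ⟨S', hS', hSc⟩ := Finset.exists_subset_card_eq hS0c
  let ef := S'.equivFinOfCardEq hSc
  let eg := F'.equivFinOfCardEq hFc
  refine ⟨fun s => (ef.symm s).1, fun s => (eg.symm s).1,
    Subtype.val_injective.comp ef.symm.injective,
    Subtype.val_injective.comp eg.symm.injective, ?_, ?_⟩
  · intro s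
    have := hF' (eg.symm s).2
    simp only [hF, hgood, mem_filter] at this
    exact this.1.1
  · intro s s'
    have h1 := hF' (eg.symm s').2
    simp only [hF, hgood, mem_filter] at h1
    have h2 := hS' (ef.symm s).2
    rw [← h1.2] at h2
    simpa [S] using h2

lemma aux_card_cons {A : Type} [DecidableEq A] {k : ℕ} (U : Fin (k + 1) → Finset A)
    (M : Finset (Fin (k + 1) → A)) (hM : M ⊆ Fintype.piFinset U) :
    M.card = ((U 0 ×ˢ Fintype.piFinset (fun i : Fin k => U i.succ)).filter
      (fun p => (Fin.cons p.1 p.2 : Fin (k + 1) → A) ∈ M)).card := by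
  symm
  refine Finset.card_bij (fun p _ => (Fin.cons p.1 p.2 : Fin (k + 1) → A)) ?_ ?_ ?_
  · intro p hp
    exact (mem_filter.1 hp).2
  · rintro ⟨a, b⟩ _ ⟨c, d⟩ _ h
    obtain ⟨h1, h2⟩ := Fin.cons_injective2 h
    exact Prod.ext h1 h2
  · intro x hx
    have h := Fintype.mem_piFinset.1 (hM hx)
    refine ⟨(x 0, Fin.tail x), ?_, Fin.cons_self_tail x⟩
    simp only [mem_filter, mem_product, Fintype.mem_piFinset, Fin.cons_self_tail]
    exact ⟨⟨h 0, fun i => h i.succ⟩, hx⟩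

/-- Nikiforov-type lemma: a dense set of `k`-tuples has a logarithmic-size blowup whose cross
pairs all lie in the shadow. -/
lemma aux_nik : ∀ (k D : ℕ), 0 < D → ∃ B : ℕ, 1 ≤ B ∧ ∀ (A : Type) [DecidableEq A] (t : ℕ)
    (U : Fin k → Finset A) (M : Finset (Fin k → A)), M ⊆ Fintype.piFinset U →
    (∏ i, (U i).card) ≤ D * M.card → (∀ i, B ^ t ≤ (U i).card) →
    ∃ X : Fin t → Fin k → A, (∀ s, X s ∈ M) ∧ (∀ i, Function.Injective (fun s => X s i)) ∧
      ∀ i j, i ≠ j → ∀ s s', ∃ m ∈ M, m i = X s i ∧ m j = X s' j := by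
  intro k
  induction k with
  | zero =>
    intro D hD
    refine ⟨1, le_rfl, ?_⟩
    intro A _ t U M hM hd _
    have : M.Nonempty := by
      rw [← Finset.card_pos]
      simp at hd
      exact Nat.pos_of_mul_pos_left (by omega : 0 < D * M.card)
    obtain ⟨x, hx⟩ := this
    exact ⟨fun _ => x, fun _ => hx, fun i => i.elim0, fun i => i.elim0⟩
  | succ k ih =>
    intro D hD
    obtain ⟨B', hB', ih⟩ := ih (2 * D) (by omega)
    refine ⟨B' ^ (4 * D) * (4 * D * 2 * 2 ^ (4 * D)), ?_, ?_⟩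
    · exact Nat.succ_le_of_lt (by positivity)
    intro A _ t U M hM hd hU
    have hB1 : B' ^ (4 * D * t) ≤ (B' ^ (4 * D) * (4 * D * 2 * 2 ^ (4 * D))) ^ t := by
      rw [pow_mul]
      exact Nat.pow_le_pow_left (Nat.le_mul_of_pos_right _ (by positivity)) t
    have hB2 : 0 < t → 4 * D * (t * 2 ^ (4 * D * t)) ≤
        (B' ^ (4 * D) * (4 * D * 2 * 2 ^ (4 * D))) ^ t := by
      intro ht
      calc 4 * D * (t * 2 ^ (4 * D * t)) ≤ (4 * D) ^ t * (2 ^ t * (2 ^ (4 * D)) ^ t) := by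
            rw [pow_mul]
            have h1 : 4 * D ≤ (4 * D) ^ t := Nat.le_self_pow (by omega) _
            have h2 : t ≤ 2 ^ t := Nat.lt_two_pow_self.le
            gcongr
        _ = (4 * D * 2 * 2 ^ (4 * D)) ^ t := by rw [mul_pow (4 * D * 2), mul_pow (4 * D) 2]; ring
        _ ≤ _ := Nat.pow_le_pow_left (Nat.le_mul_of_pos_left _ (by positivity)) t
    have hU0 : 0 < (U 0).card := lt_of_lt_of_le (by positivity) (hU 0)
    set P := Fintype.piFinset (fun i : Fin k => U i.succ) with hP
    let N : (Fin k → A) → Finset A :=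
      fun y => (U 0).filter (fun v => (Fin.cons v y : Fin (k + 1) → A) ∈ M)
    set R := P.filter (fun y => (U 0).card ≤ 2 * D * (N y).card) with hR
    have hMc : M.card = ∑ y ∈ P, (N y).card := by
      rw [aux_card_cons U M hM, Finset.card_filter, Finset.sum_product_right]
      refine Finset.sum_congr rfl (fun y _ => ?_)
      rw [← Finset.card_filter]
    have hprod : ∏ i, (U i).card = (U 0).card * P.card := by
      rw [Fin.prod_univ_succ, hP, Fintype.card_piFinset]
    have h1 : 2 * D * M.card ≤ 2 * D * (R.card * (U 0).card) + P.card * (U 0).card := by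
      rw [hMc, Finset.mul_sum]
      calc ∑ y ∈ P, 2 * D * (N y).card
          ≤ ∑ y ∈ P, ((if (U 0).card ≤ 2 * D * (N y).card then 2 * D * (U 0).card else 0)
              + (U 0).card) := by
            apply Finset.sum_le_sum
            intro y _
            have h1 : (N y).card ≤ (U 0).card := Finset.card_filter_le _ _
            have h2 := Nat.mul_le_mul_left (2 * D) h1
            split_ifs <;> omega
        _ = _ := by
            rw [Finset.sum_add_distrib, ← Finset.sum_filter]
            simp [hR]; ring
    have h2 : P.card ≤ 2 * D * R.card := by
      rw [hprod] at hd
      have : (U 0).card * P.card ≤ (U 0).card * (2 * D * R.card) := by nlinarith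
      exact Nat.le_of_mul_le_mul_left this hU0
    obtain ⟨Q, hQ1, hQ2, hQ3⟩ := ih A (4 * D * t) (fun i => U i.succ) R
      (Finset.filter_subset _ _) (by rw [← Fintype.card_piFinset]; exact h2)
      (fun i => hB1.trans (hU i.succ))
    obtain ⟨f, g, hf, hg, hgT, hfg⟩ := aux_kst D t _ hD rfl (U 0)
      (fun s v => (Fin.cons v (Q s) : Fin (k + 1) → A) ∈ M)
      (fun s => (mem_filter.1 (hQ1 s)).2)
      (by
        rcases Nat.eq_zero_or_pos t with rfl | ht
        · simp
        · exact (hB2 ht).trans (hU 0))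
    refine ⟨fun s => Fin.cons (g s) (Q (f s)), fun s => hfg s s, ?_, ?_⟩
    · intro i
      refine Fin.cases ?_ (fun i => ?_) i
      · simpa using hg
      · simpa [Function.comp_def] using (hQ2 i).comp hf
    · intro i j hij s s'
      induction i using Fin.cases with
      | zero =>
        induction j using Fin.cases with
        | zero => exact absurd rfl hij
        | succ j => exact ⟨_, hfg s' s, by simp, by simp⟩
      | succ i =>
        induction j using Fin.cases with
        | zero => exact ⟨_, hfg s s', by simp, by simp⟩
        | succ j =>
          obtain ⟨y, hy, hy1, hy2⟩ := hQ3 i j (fun h => hij (by rw [h])) (f s) (f s')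
          have hy' := (mem_filter.1 hy).2
          have : (N y).Nonempty := by
            rw [← Finset.card_pos]
            exact Nat.pos_of_mul_pos_left (lt_of_lt_of_le hU0 hy')
          obtain ⟨v, hv⟩ := this
          exact ⟨_, (mem_filter.1 hv).2, by simpa using hy1, by simpa using hy2⟩

/-- Counting lemma for lower-regular systems. -/
lemma aux_count (D : ℕ) (hD : 0 < D) : ∀ k : ℕ, ∃ E L : ℕ, 0 < E ∧ 0 < L ∧
    ∀ (A : Type) [DecidableEq A] (U : Fin k → Finset A) (R : Fin k → Fin k → A → A → Prop)
      [∀ i j x, DecidablePred (R i j x)]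
      [DecidablePred (fun x : Fin k → A => ∀ i j, i < j → R i j (x i) (x j))],
      (∀ i j, i < j → ∀ X ⊆ U i, ∀ Y ⊆ U j, (U i).card ≤ E * X.card →
        (U j).card ≤ E * Y.card → X.card * Y.card ≤ D * ∑ x ∈ X, (Y.filter (R i j x)).card) →
      ∏ i, (U i).card ≤ L * ((Fintype.piFinset U).filter
        (fun x => ∀ i j, i < j → R i j (x i) (x j))).card := by
  intro k
  induction k with
  | zero =>
    refine ⟨1, 1, one_pos, one_pos, ?_⟩
    intro A _ U R _ _ _
    simp
  | succ k ih =>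
    obtain ⟨E', L', hE', hL', ih⟩ := ih
    refine ⟨D * E' * (2 * (k + 1)), 2 * D ^ k * L', by positivity, by positivity, ?_⟩
    intro A _ U R _ _ reg
    classical
    have hED : D * E' ≤ D * E' * (2 * (k + 1)) := Nat.le_mul_of_pos_right _ (by positivity)
    have hE2 : 2 * (k + 1) ≤ D * E' * (2 * (k + 1)) := Nat.le_mul_of_pos_left _ (by positivity)
    have hE1 : 1 ≤ D * E' * (2 * (k + 1)) := by
      have : 0 < D * E' * (2 * (k + 1)) := by positivity
      exact this
    let W : A → Fin k → Finset A := fun v j => (U j.succ).filter (R 0 j.succ v)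
    let bad : Fin k → Finset A :=
      fun j => (U 0).filter (fun v => D * (W v j).card < (U j.succ).card)
    have hbad : ∀ j, 2 * (k + 1) * (bad j).card ≤ (U 0).card := by
      intro j
      by_contra hcon
      push Not at hcon
      have hne : (bad j).Nonempty := by
        rw [← Finset.card_pos]
        by_contra h0
        have : (bad j).card = 0 := by omega
        rw [this] at hcon
        omega
      have h1 := reg 0 j.succ (Fin.succ_pos j) (bad j) (Finset.filter_subset _ _) (U j.succ)
        (Finset.Subset.refl _) (hcon.le.trans (Nat.mul_le_mul_right _ hE2))
        (by simpa using Nat.mul_le_mul_right (U j.succ).card hE1)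
      rw [Finset.mul_sum] at h1
      have h2 : ∑ x ∈ bad j, D * ((U j.succ).filter (R 0 j.succ x)).card
          < ∑ x ∈ bad j, (U j.succ).card :=
        Finset.sum_lt_sum_of_nonempty hne (fun x hx => (mem_filter.1 hx).2)
      simp only [Finset.sum_const, smul_eq_mul] at h2
      omega
    set good := U 0 \ (univ.biUnion bad) with hgood
    have hgc : (U 0).card ≤ 2 * good.card := by
      have h1 : (U 0).card ≤ good.card + (univ.biUnion bad).card := by
        have := Finset.le_card_sdiff (univ.biUnion bad) (U 0)
        rw [← hgood] at this
        omega
      have h2 : (univ.biUnion bad).card ≤ ∑ j, (bad j).card := Finset.card_biUnion_le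
      have h3 : 2 * (k + 1) * ∑ j, (bad j).card ≤ k * (U 0).card := by
        rw [Finset.mul_sum]
        calc _ ≤ ∑ j : Fin k, (U 0).card := Finset.sum_le_sum (fun j _ => hbad j)
          _ = _ := by simp
      have h4 : 2 * ∑ j, (bad j).card ≤ (U 0).card := by
        have : (k + 1) * (2 * ∑ j, (bad j).card) ≤ (k + 1) * (U 0).card := by nlinarith
        exact Nat.le_of_mul_le_mul_left this (by positivity)
      omega
    set M := (Fintype.piFinset U).filter (fun x => ∀ i j, i < j → R i j (x i) (x j)) with hM
    let cnt : A → Finset (Fin k → A) := fun v => (Fintype.piFinset (W v)).filter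
      (fun x => ∀ i j, i < j → R i.succ j.succ (x i) (x j))
    have hgW : ∀ v ∈ good, ∀ j, (U j.succ).card ≤ D * (W v j).card := by
      intro v hv j
      rw [hgood, mem_sdiff, mem_biUnion] at hv
      by_contra hcon
      exact hv.2 ⟨j, mem_univ _, mem_filter.2 ⟨hv.1, not_le.1 hcon⟩⟩
    have hcnt : ∀ v ∈ good, ∏ j : Fin k, (U j.succ).card ≤ D ^ k * L' * (cnt v).card := by
      intro v hv
      have h1 := ih A (W v) (fun i j => R i.succ j.succ) (by
        intro i j hij X hX Y hY hXc hYc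
        refine reg i.succ j.succ (Fin.succ_lt_succ_iff.2 hij) X
          (hX.trans (Finset.filter_subset _ _)) Y (hY.trans (Finset.filter_subset _ _)) ?_ ?_
        · calc _ ≤ D * (W v i).card := hgW v hv i
            _ ≤ D * (E' * X.card) := Nat.mul_le_mul_left _ hXc
            _ = D * E' * X.card := by ring
            _ ≤ _ := Nat.mul_le_mul_right _ hED
        · calc _ ≤ D * (W v j).card := hgW v hv j
            _ ≤ D * (E' * Y.card) := Nat.mul_le_mul_left _ hYc
            _ = D * E' * Y.card := by ring
            _ ≤ _ := Nat.mul_le_mul_right _ hED)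
      calc ∏ j : Fin k, (U j.succ).card ≤ ∏ j : Fin k, (D * (W v j).card) :=
            Finset.prod_le_prod' (fun j _ => hgW v hv j)
        _ = D ^ k * ∏ j : Fin k, (W v j).card := by
            rw [Finset.prod_mul_distrib]; simp
        _ ≤ D ^ k * (L' * (cnt v).card) := Nat.mul_le_mul_left _ h1
        _ = _ := by ring
    have hsum : ∑ v ∈ good, (cnt v).card ≤ M.card := by
      rw [← Finset.card_sigma]
      refine Finset.card_le_card_of_injOn
        (fun p => (Fin.cons p.1 p.2 : Fin (k + 1) → A)) ?_ ?_
      · rintro ⟨v, y⟩ hp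
        simp only [mem_coe, mem_sigma, cnt, mem_filter, Fintype.mem_piFinset, W] at hp
        obtain ⟨hv, hy, hyR⟩ := hp
        simp only [hM, mem_coe, mem_filter, Fintype.mem_piFinset]
        constructor
        · intro i
          induction i using Fin.cases with
          | zero => simpa using (mem_sdiff.1 hv).1
          | succ i => simpa using (hy i).1
        · intro i j hij
          induction j using Fin.cases with
          | zero => exact absurd hij (Fin.not_lt_zero i)
          | succ j =>
            induction i using Fin.cases with
            | zero => simpa using (hy j).2
            | succ i => simpa using hyR i j (Fin.succ_lt_succ_iff.1 hij)
      · rintro ⟨a, b⟩ _ ⟨c, d⟩ _ h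
        obtain ⟨h1, h2⟩ := Fin.cons_injective2 h
        exact Sigma.ext h1 (heq_of_eq h2)
    rw [Fin.prod_univ_succ]
    calc (U 0).card * ∏ j : Fin k, (U j.succ).card
        ≤ 2 * good.card * ∏ j : Fin k, (U j.succ).card := Nat.mul_le_mul_right _ hgc
      _ = 2 * ∑ v ∈ good, ∏ j : Fin k, (U j.succ).card := by simp; ring
      _ ≤ 2 * ∑ v ∈ good, D ^ k * L' * (cnt v).card :=
          Nat.mul_le_mul_left _ (Finset.sum_le_sum hcnt)
      _ = 2 * D ^ k * L' * ∑ v ∈ good, (cnt v).card := by rw [← Finset.mul_sum]; ring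
      _ ≤ _ := Nat.mul_le_mul_left _ hsum

/-- Number of pairs in `X × Y` coloured `c`. -/
noncomputable def auxE {V A : Type} {r : ℕ} (K : V → V → A → A → Fin r) (c : Fin r) (u w : V)
    (X Y : Finset A) : ℝ :=
  ∑ x ∈ X, ∑ y ∈ Y, if K u w x y = c then (1 : ℝ) else 0

/-- Density of colour `c` between `X` and `Y`. -/
noncomputable def auxD {V A : Type} {r : ℕ} (K : V → V → A → A → Fin r) (c : Fin r) (u w : V)
    (X Y : Finset A) : ℝ :=
  auxE K c u w X Y / (X.card * Y.card)

lemma auxE_symm {V A : Type} {r : ℕ} (K : V → V → A → A → Fin r)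
    (hK : ∀ u w x y, K u w x y = K w u y x) (c : Fin r) (u w : V) (X Y : Finset A) :
    auxE K c u w X Y = auxE K c w u Y X := by
  unfold auxE
  rw [Finset.sum_comm]
  refine Finset.sum_congr rfl (fun y _ => Finset.sum_congr rfl (fun x _ => ?_))
  rw [hK]

lemma auxD_symm {V A : Type} {r : ℕ} (K : V → V → A → A → Fin r)
    (hK : ∀ u w x y, K u w x y = K w u y x) (c : Fin r) (u w : V) (X Y : Finset A) :
    auxD K c u w X Y = auxD K c w u Y X := by
  unfold auxD
  rw [auxE_symm K hK, mul_comm]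

lemma auxE_nonneg {V A : Type} {r : ℕ} (K : V → V → A → A → Fin r) (c : Fin r) (u w : V)
    (X Y : Finset A) : 0 ≤ auxE K c u w X Y :=
  Finset.sum_nonneg (fun _ _ => Finset.sum_nonneg (fun _ _ => by split_ifs <;> norm_num))

lemma auxE_le {V A : Type} {r : ℕ} (K : V → V → A → A → Fin r) (c : Fin r) (u w : V)
    (X Y : Finset A) : auxE K c u w X Y ≤ X.card * Y.card := by
  unfold auxE
  calc _ ≤ ∑ x ∈ X, ∑ y ∈ Y, (1 : ℝ) :=
        Finset.sum_le_sum (fun _ _ => Finset.sum_le_sum (fun _ _ => by split_ifs <;> norm_num))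
    _ = _ := by simp

lemma auxE_sum {V A : Type} {r : ℕ} (K : V → V → A → A → Fin r) (u w : V)
    (X Y : Finset A) : ∑ c, auxE K c u w X Y = X.card * Y.card := by
  unfold auxE
  rw [Finset.sum_comm]
  have : ∀ x ∈ X, ∑ c : Fin r, ∑ y ∈ Y, (if K u w x y = c then (1 : ℝ) else 0) = Y.card := by
    intro x _
    rw [Finset.sum_comm]
    simp
  rw [Finset.sum_congr rfl this]
  simp

lemma auxD_nonneg {V A : Type} {r : ℕ} (K : V → V → A → A → Fin r) (c : Fin r) (u w : V)
    (X Y : Finset A) : 0 ≤ auxD K c u w X Y :=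
  div_nonneg (auxE_nonneg _ _ _ _ _ _) (by positivity)

lemma auxD_le_one {V A : Type} {r : ℕ} (K : V → V → A → A → Fin r) (c : Fin r) (u w : V)
    (X Y : Finset A) : auxD K c u w X Y ≤ 1 :=
  div_le_one_of_le₀ (auxE_le _ _ _ _ _ _) (by positivity)

lemma auxD_split {V A : Type} [DecidableEq A] {r : ℕ} (K : V → V → A → A → Fin r) (c : Fin r)
    (u w : V) (X X' Y : Finset A) (hd : Disjoint X X') (hX : X.Nonempty) (hX' : X'.Nonempty) :
    auxD K c u w (X ∪ X') Y = (X.card / (X ∪ X').card : ℝ) * auxD K c u w X Y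
      + (X'.card / (X ∪ X').card : ℝ) * auxD K c u w X' Y := by
  have h1 : auxE K c u w (X ∪ X') Y = auxE K c u w X Y + auxE K c u w X' Y := by
    unfold auxE; rw [Finset.sum_union hd]
  have hx : (0 : ℝ) < X.card := by exact_mod_cast hX.card_pos
  have hx' : (0 : ℝ) < X'.card := by exact_mod_cast hX'.card_pos
  unfold auxD
  rw [h1, Finset.card_union_of_disjoint hd]
  push_cast
  rcases Y.eq_empty_or_nonempty with rfl | hY
  · simp
  have hy : (0 : ℝ) < Y.card := by exact_mod_cast hY.card_pos
  field_simp

/-- Square-density term. -/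
noncomputable def auxQ {V A : Type} [DecidableEq V] {r : ℕ} (K : V → V → A → A → Fin r)
    (U : V → Finset A) (z : V × V × Fin r) : ℝ :=
  if z.1 = z.2.1 then 0 else auxD K z.2.2 z.1 z.2.1 (U z.1) (U z.2.1) ^ 2

/-- The potential. -/
noncomputable def auxPhi {V A : Type} [Fintype V] [DecidableEq V] {r : ℕ}
    (K : V → V → A → A → Fin r) (l : ℝ) (U : V → Finset A) : ℝ :=
  ∑ z, auxQ K U z + l * ∑ v, Real.log (U v).card

lemma aux_sq (p q a b : ℝ) (hq : 0 ≤ q) (h : p + q = 1) :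
    (p * a + q * b) ^ 2 + p * (a - (p * a + q * b)) ^ 2 ≤ p * a ^ 2 + q * b ^ 2 := by
  have hp : p = 1 - q := by linarith
  subst hp
  have : 0 ≤ q * (b - ((1 - q) * a + q * b)) ^ 2 := by positivity
  nlinarith

lemma auxQ_split {V A : Type} [DecidableEq V] [DecidableEq A] {r : ℕ}
    (K : V → V → A → A → Fin r) (hK : ∀ u w x y, K u w x y = K w u y x)
    (U : V → Finset A) (v : V) (X X' : Finset A) (hU : U v = X ∪ X')
    (hd : Disjoint X X') (hX : X.Nonempty) (hX' : X'.Nonempty) (z : V × V × Fin r) :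
    auxQ K U z + (if z.1 = v ∧ z.2.1 ≠ v then (X.card / (U v).card : ℝ) *
        (auxD K z.2.2 v z.2.1 X (U z.2.1) - auxD K z.2.2 v z.2.1 (U v) (U z.2.1)) ^ 2 else 0) ≤
      (X.card / (U v).card : ℝ) * auxQ K (Function.update U v X) z
        + (X'.card / (U v).card : ℝ) * auxQ K (Function.update U v X') z := by
  obtain ⟨u, w, c⟩ := z
  have hx : (0 : ℝ) < X.card := by exact_mod_cast hX.card_pos
  have hx' : (0 : ℝ) < X'.card := by exact_mod_cast hX'.card_pos
  have hs : (X.card / (U v).card : ℝ) + (X'.card / (U v).card : ℝ) = 1 := by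
    rw [hU, Finset.card_union_of_disjoint hd]
    push_cast
    field_simp
  have hp : (0 : ℝ) ≤ (X.card / (U v).card : ℝ) := by positivity
  have hq : (0 : ℝ) ≤ (X'.card / (U v).card : ℝ) := by positivity
  have key : ∀ w c, auxD K c v w (U v) (U w) = (X.card / (U v).card : ℝ) * auxD K c v w X (U w)
      + (X'.card / (U v).card : ℝ) * auxD K c v w X' (U w) := by
    intro w c
    have := auxD_split K c v w X X' (U w) hd hX hX'
    rw [← hU] at this
    exact this
  simp only [auxQ]
  by_cases huw : u = w
  · subst huw
    simp
  by_cases huv : u = v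
  · subst huv
    have hwu : w ≠ u := fun h => huw h.symm
    simp only [huw, if_false, hwu, ne_eq, not_false_eq_true, and_self, if_true,
      Function.update_self, Function.update_of_ne hwu]
    rw [key w c]
    exact aux_sq _ _ _ _ hq hs
  · by_cases hwv : w = v
    · subst hwv
      simp only [huw, if_false, false_and, Function.update_self, Function.update_of_ne huv, add_zero]
      rw [auxD_symm K hK c u w, auxD_symm K hK c u w, auxD_symm K hK c u w, key u c]
      have := aux_sq _ _ (auxD K c w u X (U u)) (auxD K c w u X' (U u)) hq hs
      have h2 : 0 ≤ (X.card / (U w).card : ℝ) * (auxD K c w u X (U u) -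
        ((X.card / (U w).card : ℝ) * auxD K c w u X (U u)
          + (X'.card / (U w).card : ℝ) * auxD K c w u X' (U u))) ^ 2 := by positivity
      linarith
    · simp only [huw, if_false, huv, false_and, Function.update_of_ne huv,
        Function.update_of_ne hwv, add_zero]
      rw [← add_mul, hs, one_mul]

lemma aux_log_split (X X' : ℝ) (hx : 0 < X) (hx' : 0 < X') :
    Real.log (X + X') - 1 ≤ X / (X + X') * Real.log X + X' / (X + X') * Real.log X' := by
  have h1 : ∀ y : ℝ, 0 < y → y / (X + X') - 1 ≤
      y / (X + X') * (Real.log y - Real.log (X + X')) := by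
    intro y hy
    have hS : 0 < X + X' := by positivity
    rw [← Real.log_div hy.ne' hS.ne']
    have hp : 0 < y / (X + X') := by positivity
    have := Real.one_sub_inv_le_log_of_pos hp
    have h3 := mul_le_mul_of_nonneg_left this hp.le
    rw [mul_sub, mul_inv_cancel₀ hp.ne'] at h3
    linarith
  have ha := h1 X hx
  have hb := h1 X' hx'
  have hs : X / (X + X') + X' / (X + X') = 1 := by field_simp
  have h4 : X / (X + X') * Real.log (X + X') + X' / (X + X') * Real.log (X + X')
      = Real.log (X + X') := by rw [← add_mul, hs, one_mul]
  nlinarith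

lemma aux_step {V A : Type} [Fintype V] [DecidableEq V] [DecidableEq A] {r : ℕ}
    (K : V → V → A → A → Fin r) (hK : ∀ u w x y, K u w x y = K w u y x)
    (l : ℝ) (hl : 0 ≤ l) (m η : ℝ) (hη : 0 ≤ η) (U : V → Finset A) (hU : ∀ v, (U v).Nonempty)
    (hm : ∀ U' : V → Finset A, (∀ v, (U' v).Nonempty) → auxPhi K l U' ≤ m)
    (hUm : m - η ≤ auxPhi K l U) (v w : V) (hvw : v ≠ w) (c : Fin r) (X : Finset A)
    (hX : X.Nonempty) (hXU : X ⊆ U v) (E : ℕ) (hE : 1 ≤ E) (hXc : (U v).card ≤ E * X.card) :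
    m - E * (l + η) + (auxD K c v w X (U w) - auxD K c v w (U v) (U w)) ^ 2
      ≤ auxPhi K l (Function.update U v X) := by
  have hE' : (1 : ℝ) ≤ E := by exact_mod_cast hE
  rcases (U v \ X).eq_empty_or_nonempty with h0 | hne
  · have : X = U v := Finset.Subset.antisymm hXU (Finset.sdiff_eq_empty_iff_subset.1 h0)
    subst this
    simp only [Function.update_eq_self, sub_self]
    nlinarith
  obtain ⟨X', hd, hUX, hX'⟩ : ∃ X', Disjoint X X' ∧ U v = X ∪ X' ∧ X'.Nonempty :=
    ⟨U v \ X, Finset.disjoint_sdiff, (Finset.union_sdiff_of_subset hXU).symm, hne⟩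
  have hx : (0 : ℝ) < X.card := by exact_mod_cast hX.card_pos
  have hx' : (0 : ℝ) < X'.card := by exact_mod_cast hX'.card_pos
  have hcard : ((U v).card : ℝ) = X.card + X'.card := by
    rw [hUX, Finset.card_union_of_disjoint hd]; push_cast; rfl
  set p : ℝ := X.card / (U v).card with hp
  set q : ℝ := X'.card / (U v).card with hq
  have hs : p + q = 1 := by
    rw [hp, hq, hcard]; field_simp
  have hp0 : 0 < p := by rw [hp, hcard]; positivity
  have hq0 : 0 ≤ q := by rw [hq, hcard]; positivity
  set g := (auxD K c v w X (U w) - auxD K c v w (U v) (U w)) ^ 2 with hg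
  -- the square part
  have hQ : ∑ z, auxQ K U z + p * g ≤ p * ∑ z, auxQ K (Function.update U v X) z
      + q * ∑ z, auxQ K (Function.update U v X') z := by
    have h1 := Finset.sum_le_sum (s := univ)
      (fun z _ => auxQ_split K hK U v X X' hUX hd hX hX' z)
    rw [Finset.sum_add_distrib, Finset.sum_add_distrib, ← Finset.mul_sum, ← Finset.mul_sum] at h1
    have h2 := Finset.single_le_sum (s := (univ : Finset (V × V × Fin r)))
      (f := fun z => if z.1 = v ∧ z.2.1 ≠ v then (X.card / (U v).card : ℝ) *
        (auxD K z.2.2 v z.2.1 X (U z.2.1) - auxD K z.2.2 v z.2.1 (U v) (U z.2.1)) ^ 2 else 0)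
      (fun z _ => by
        split_ifs
        · positivity
        · exact le_rfl) (mem_univ (v, w, c))
    simp only [ne_eq, hvw.symm, not_false_eq_true, and_self, if_true] at h2
    linarith
  have hL : ∑ x, Real.log (U x).card - 1 ≤
      p * ∑ x, Real.log (Function.update U v X x).card
      + q * ∑ x, Real.log (Function.update U v X' x).card := by
    have hsum : ∀ Z : Finset A, ∑ x, Real.log (Function.update U v Z x).card
        = Real.log Z.card + ∑ x ∈ univ.erase v, Real.log (U x).card := by
      intro Z
      rw [← Finset.add_sum_erase _ _ (mem_univ v), Function.update_self]
      congr 1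
      refine Finset.sum_congr rfl (fun x hx => ?_)
      rw [Function.update_of_ne (Finset.ne_of_mem_erase hx)]
    rw [hsum X, hsum X', ← Finset.add_sum_erase _ _ (mem_univ v)]
    have := aux_log_split X.card X'.card hx hx'
    rw [← hcard] at this
    have h5 : p * (∑ x ∈ univ.erase v, Real.log (U x).card)
        + q * (∑ x ∈ univ.erase v, Real.log (U x).card)
        = ∑ x ∈ univ.erase v, Real.log (U x).card := by rw [← add_mul, hs, one_mul]
    rw [mul_add, mul_add]
    linarith
  have hX'm := hm (Function.update U v X') (by
    intro x
    by_cases hxv : x = v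
    · subst hxv; simpa using hX'
    · rw [Function.update_of_ne hxv]; exact hU x)
  have hcomb : auxPhi K l U - l + p * g ≤ p * auxPhi K l (Function.update U v X)
      + q * auxPhi K l (Function.update U v X') := by
    have := mul_le_mul_of_nonneg_left hL hl
    unfold auxPhi
    nlinarith
  have h6 : q * auxPhi K l (Function.update U v X') ≤ q * m :=
    mul_le_mul_of_nonneg_left hX'm hq0
  have h7 : p * m - (l + η) + p * g ≤ p * auxPhi K l (Function.update U v X) := by
    have : q * m = m - p * m := by rw [← eq_sub_iff_add_eq'] at hs; rw [hs]; ring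
    linarith
  have hpE : 1 ≤ p * E := by
    have h8 : ((U v).card : ℝ) ≤ E * X.card := by exact_mod_cast hXc
    have h9 : (0 : ℝ) < (U v).card := by rw [hcard]; positivity
    rw [hp, div_mul_eq_mul_div, le_div_iff₀ h9]
    linarith
  have h10 : p * (m - E * (l + η) + g) ≤ p * auxPhi K l (Function.update U v X) := by
    have : (l + η) ≤ p * E * (l + η) := le_mul_of_one_le_left (by positivity) hpE
    linarith
  exact le_of_mul_le_mul_left h10 hp0

/-- Existence of large subsets for which each dense colour is lower-regular. -/
lemma aux_regular (r E : ℕ) (hr : 1 ≤ r) (hE : 1 ≤ E) (V : Type) [Fintype V] :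
    ∃ a : ℕ, 1 ≤ a ∧ ∀ (A : Type) [Fintype A] [Nonempty A] (K : V → V → A → A → Fin r),
      (∀ u w x y, K u w x y = K w u y x) → ∃ U : V → Finset A,
        (∀ v, (U v).Nonempty) ∧ (∀ v, Fintype.card A ≤ a * (U v).card) ∧
        ∀ u w c, u ≠ w → (1 / r : ℝ) ≤ auxD K c u w (U u) (U w) →
          ∀ X ⊆ U u, ∀ Y ⊆ U w, (U u).card ≤ E * X.card → (U w).card ≤ E * Y.card →
            (1 / (2 * r) : ℝ) ≤ auxD K c u w X Y := by
  classical
  have hr' : (1 : ℝ) ≤ r := by exact_mod_cast hr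
  have hE' : (1 : ℝ) ≤ E := by exact_mod_cast hE
  set l : ℝ := 1 / (32 * r ^ 2 * E ^ 2) with hl
  have hl0 : 0 < l := by positivity
  set T : ℝ := ((Fintype.card (V × V × Fin r) : ℕ) : ℝ) with hT
  refine ⟨⌈Real.exp (T / l)⌉₊, Nat.one_le_ceil_iff.2 (Real.exp_pos _), ?_⟩
  intro A _ _ K hK
  obtain ⟨U, hUmem, hUmax⟩ := Finset.exists_max_image
    ((univ : Finset (V → Finset A)).filter (fun U => ∀ v, (U v).Nonempty)) (auxPhi K l)
    ⟨fun _ => univ, by simp [Finset.univ_nonempty]⟩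
  have hU : ∀ v, (U v).Nonempty := (mem_filter.1 hUmem).2
  have hm : ∀ U' : V → Finset A, (∀ v, (U' v).Nonempty) → auxPhi K l U' ≤ auxPhi K l U :=
    fun U' h => hUmax U' (mem_filter.2 ⟨mem_univ _, h⟩)
  refine ⟨U, hU, ?_, ?_⟩
  · intro v
    have h1 := hm (fun _ => univ) (fun _ => Finset.univ_nonempty)
    have hQ0 : 0 ≤ ∑ z, auxQ K (fun _ => univ) z := Finset.sum_nonneg (fun z _ => by
      unfold auxQ; split_ifs
      · exact le_rfl
      · positivity)
    have hQ1 : ∑ z, auxQ K U z ≤ T := by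
      calc _ ≤ ∑ z : V × V × Fin r, (1 : ℝ) := Finset.sum_le_sum (fun z _ => by
            unfold auxQ; split_ifs
            · norm_num
            · exact pow_le_one₀ (auxD_nonneg _ _ _ _ _ _) (auxD_le_one _ _ _ _ _ _))
        _ = T := by simp [hT]
    have hlog : ∑ x, Real.log (U x).card ≤ Real.log (U v).card +
        ∑ x ∈ univ.erase v, Real.log (Fintype.card A) := by
      rw [← Finset.add_sum_erase _ _ (mem_univ v)]
      have : ∑ x ∈ univ.erase v, Real.log (U x).card ≤
          ∑ x ∈ univ.erase v, Real.log (Fintype.card A) := by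
        refine Finset.sum_le_sum (fun x _ => Real.log_le_log ?_ ?_)
        · exact_mod_cast (hU x).card_pos
        · exact_mod_cast Finset.card_le_univ (U x)
      linarith
    have hlog2 : ∑ x : V, Real.log (Fintype.card A) = Real.log (Fintype.card A) +
        ∑ x ∈ univ.erase v, Real.log (Fintype.card A) :=
      (Finset.add_sum_erase univ (fun _ : V => Real.log (Fintype.card A)) (mem_univ v)).symm
    simp only [auxPhi, Finset.card_univ] at h1
    have h2 : l * (∑ x : V, Real.log (Fintype.card A) - ∑ x, Real.log (U x).card) ≤ T := by
      linarith
    have h3 : Real.log (Fintype.card A) - Real.log (U v).card ≤ T / l := by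
      rw [le_div_iff₀' hl0]
      refine le_trans (mul_le_mul_of_nonneg_left ?_ hl0.le) h2
      linarith
    have hA : (0 : ℝ) < Fintype.card A := by exact_mod_cast Fintype.card_pos
    have hUv : (0 : ℝ) < (U v).card := by exact_mod_cast (hU v).card_pos
    rw [← Real.log_div hA.ne' hUv.ne', Real.log_le_iff_le_exp (by positivity),
      div_le_iff₀ hUv] at h3
    have h4 : (Fintype.card A : ℝ) ≤ ⌈Real.exp (T / l)⌉₊ * (U v).card :=
      h3.trans (mul_le_mul_of_nonneg_right (Nat.le_ceil _) hUv.le)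
    exact_mod_cast h4
  · intro u w c huw hdens X hXU Y hYU hXc hYc
    have hX : X.Nonempty := by
      rw [← Finset.card_pos]
      exact Nat.pos_of_mul_pos_left (lt_of_lt_of_le (hU u).card_pos hXc)
    have hY : Y.Nonempty := by
      rw [← Finset.card_pos]
      exact Nat.pos_of_mul_pos_left (lt_of_lt_of_le (hU w).card_pos hYc)
    set m := auxPhi K l U with hmdef
    have hUX : ∀ v, (Function.update U u X v).Nonempty := by
      intro v
      by_cases hvu : v = u
      · subst hvu; simpa using hX
      · rw [Function.update_of_ne hvu]; exact hU v
    have hUXY : ∀ v, (Function.update (Function.update U u X) w Y v).Nonempty := by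
      intro v
      by_cases hvu : v = w
      · subst hvu; simpa using hY
      · rw [Function.update_of_ne hvu]; exact hUX v
    have m1 := hm _ hUX
    have m2 := hm _ hUXY
    have s1 := aux_step K hK l hl0.le m 0 le_rfl U hU hm (by simp [hmdef]) u w huw
      c X hX hXU E hE hXc
    set g1 := auxD K c u w X (U w) - auxD K c u w (U u) (U w) with hg1
    have hEl : 0 ≤ E * l := by positivity
    have s2 := aux_step K hK l hl0.le m (E * l) hEl (Function.update U u X) hUX hm
      (by nlinarith [sq_nonneg g1]) w u huw.symm c Y hY
      (by rw [Function.update_of_ne huw.symm]; exact hYU) E hE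
      (by rw [Function.update_of_ne huw.symm]; exact hYc)
    rw [Function.update_self, Function.update_of_ne huw.symm, auxD_symm K hK c w u,
      auxD_symm K hK c w u] at s2
    set g2 := auxD K c u w X Y - auxD K c u w X (U w) with hg2
    have hb : 2 * E ^ 2 * l = (1 / (4 * r)) ^ 2 := by
      rw [hl]; field_simp; norm_num
    have hEE : E * l ≤ E ^ 2 * l := by
      have : (E : ℝ) ≤ E ^ 2 := by nlinarith
      exact mul_le_mul_of_nonneg_right this hl0.le
    have b1 : g1 ^ 2 ≤ (1 / (4 * r)) ^ 2 := by
      rw [← hb]; nlinarith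
    have b2 : g2 ^ 2 ≤ (1 / (4 * r)) ^ 2 := by
      rw [← hb]; nlinarith
    have c1 := (abs_le.1 (abs_le_of_sq_le_sq b1 (by positivity))).1
    have c2 := (abs_le.1 (abs_le_of_sq_le_sq b2 (by positivity))).1
    have e1 : (1 / (2 * r) : ℝ) = 1 / r - 1 / (4 * r) - 1 / (4 * r) := by
      field_simp; norm_num
    rw [e1]
    linarith

lemma aux_arith (r P S : ℝ) (hr : 0 < r) (h : 1 / (2 * r) * P ≤ S) : P ≤ 2 * r * S := by
  have h4 := mul_le_mul_of_nonneg_left h (by positivity : (0 : ℝ) ≤ 2 * r)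
  have h5 : (2 * r : ℝ) * (1 / (2 * r) * P) = P := by field_simp
  rwa [h5] at h4

end Aux

/-- Theorem 1.2 in the paper. If `G →_r H` with `r ≥ 2`, then there are
constants `a = a(G,H,r) > 0` and `b = b(H,r) > 1`, where `b` does not depend on `G`, such that
`B_r(G → H; t) ≤ a · b^t` for every positive integer `t`. -/
theorem blowup_ramsey_exponential_base_independent_of_G
    (α : Type) [Fintype α] (H : SimpleGraph α) (r : ℕ) (hr : 2 ≤ r) :
    ∃ b : ℝ, 1 < b ∧
      ∀ (V : Type) [Fintype V] (G : SimpleGraph V), ArrowsFor G H r →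
        ∃ a : ℝ, 0 < a ∧ ∀ t : ℕ, 1 ≤ t →
          ∃ n : ℕ, (n : ℝ) ≤ a * b ^ t ∧ BlowupArrow G H r n t := by
  classical
  obtain ⟨E, L, hE, hL, hcount⟩ := aux_count (2 * r) (by omega) (Fintype.card α)
  obtain ⟨B, hB, hnik⟩ := aux_nik (Fintype.card α) L hL
  refine ⟨(B : ℝ) + 1, ?_, ?_⟩
  · have : (1 : ℝ) ≤ B := by exact_mod_cast hB
    linarith
  intro V _ G hG
  obtain ⟨a, ha, hreg⟩ := aux_regular r E (by omega) hE V
  refine ⟨a, by exact_mod_cast ha, ?_⟩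
  intro t ht
  refine ⟨a * B ^ t, ?_, ?_⟩
  · push_cast
    gcongr
    linarith
  intro C
  have hn : 0 < a * B ^ t := by positivity
  generalize hnn : a * B ^ t = n at C hn
  have : Nonempty (Fin n) := ⟨⟨0, hn⟩⟩
  have hr0 : (0 : ℝ) < r := by exact_mod_cast (by omega : 0 < r)
  let K : V → V → Fin n → Fin n → Fin r := fun u w x y => C s((u, x), (w, y))
  have hK : ∀ u w x y, K u w x y = K w u y x := by
    intro u w x y
    simp only [K]
    rw [Sym2.eq_swap]
  obtain ⟨U, hUne, hUc, hUreg⟩ := hreg (Fin n) K hK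
  have hUB : ∀ v, B ^ t ≤ (U v).card := by
    intro v
    have := hUc v
    rw [Fintype.card_fin] at this
    exact Nat.le_of_mul_le_mul_left (hnn.le.trans this) (by omega)
  -- majority colour
  have hmaj : ∀ u w, ∃ c, (1 / r : ℝ) ≤ auxD K c u w (U u) (U w) := by
    intro u w
    by_contra hcon
    push Not at hcon
    have : Nonempty (Fin r) := ⟨⟨0, by omega⟩⟩
    have h1 : ∑ c : Fin r, auxD K c u w (U u) (U w) < ∑ c : Fin r, (1 / r : ℝ) :=
      Finset.sum_lt_sum_of_nonempty Finset.univ_nonempty (fun c _ => hcon c)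
    have hu : (0 : ℝ) < (U u).card := by exact_mod_cast (hUne u).card_pos
    have hw : (0 : ℝ) < (U w).card := by exact_mod_cast (hUne w).card_pos
    have h2 : ∑ c : Fin r, auxD K c u w (U u) (U w) = 1 := by
      unfold auxD
      rw [← Finset.sum_div, auxE_sum]
      exact div_self (by positivity)
    have h3 : ∑ c : Fin r, (1 / r : ℝ) = 1 := by
      simp [hr0.ne']
    linarith
  have hmaj2 : ∀ z : Sym2 V, ∃ c, ∀ u w, z = s(u, w) →
      (1 / r : ℝ) ≤ auxD K c u w (U u) (U w) := by
    intro z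
    induction z using Sym2.ind with
    | _ u w =>
      obtain ⟨c, hc⟩ := hmaj u w
      refine ⟨c, fun u' w' h => ?_⟩
      rcases Sym2.eq_iff.1 h with ⟨rfl, rfl⟩ | ⟨rfl, rfl⟩
      · exact hc
      · rw [auxD_symm K hK]; exact hc
  choose C0 hC0 using hmaj2
  obtain ⟨f, c, hf, hfc⟩ := hG C0
  let e : α ≃ Fin (Fintype.card α) := Fintype.equivFin α
  let φ : Fin (Fintype.card α) → V := fun i => f (e.symm i)
  let R : Fin (Fintype.card α) → Fin (Fintype.card α) → Fin n → Fin n → Prop :=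
    fun i j x y => H.Adj (e.symm i) (e.symm j) → K (φ i) (φ j) x y = c
  have hc := hcount (Fin n) (fun i => U (φ i)) R (by
    intro i j hij X hX Y hY hXc hYc
    by_cases hadj : H.Adj (e.symm i) (e.symm j)
    · have hne : φ i ≠ φ j := fun h => hij.ne (e.symm.injective (hf h))
      have hd : (1 / r : ℝ) ≤ auxD K c (φ i) (φ j) (U (φ i)) (U (φ j)) := by
        have := hC0 s(φ i, φ j) (φ i) (φ j) rfl
        rwa [(hfc _ _ hadj).2] at this
      have h1 := hUreg (φ i) (φ j) c hne hd X hX Y hY hXc hYc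
      have hXp : (0 : ℝ) < X.card := by
        exact_mod_cast Nat.pos_of_mul_pos_left (lt_of_lt_of_le (hUne _).card_pos hXc)
      have hYp : (0 : ℝ) < Y.card := by
        exact_mod_cast Nat.pos_of_mul_pos_left (lt_of_lt_of_le (hUne _).card_pos hYc)
      have h2 : auxE K c (φ i) (φ j) X Y
          = ((∑ x ∈ X, (Y.filter (R i j x)).card : ℕ) : ℝ) := by
        unfold auxE
        push_cast
        refine Finset.sum_congr rfl (fun x _ => ?_)
        rw [Finset.sum_boole]
        congr 2
        refine Finset.filter_congr (fun y _ => ?_)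
        exact ⟨fun h _ => h, fun h => h hadj⟩
      unfold auxD at h1
      rw [h2, le_div_iff₀ (mul_pos hXp hYp)] at h1
      generalize (∑ x ∈ X, (Y.filter (R i j x)).card) = S at h1 ⊢
      have h3 : (X.card : ℝ) * Y.card ≤ 2 * r * S :=
        aux_arith _ _ _ hr0 h1
      exact_mod_cast h3
    · have hR : ∀ x, Y.filter (R i j x) = Y := by
        intro x
        exact Finset.filter_true_of_mem (fun y _ h => absurd h hadj)
      simp only [hR, Finset.sum_const, smul_eq_mul]
      exact Nat.le_mul_of_pos_left _ (by omega))
  obtain ⟨X, hX1, hX2, hX3⟩ := hnik (Fin n) t (fun i => U (φ i)) _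
    (Finset.filter_subset _ _) hc (fun i => hUB _)
  refine ⟨f, fun b s => X s (e b), c, hf, fun b => hX2 (e b), ?_⟩
  intro b b' hbb
  refine ⟨(hfc b b' hbb).1, ?_⟩
  intro s s'
  have hne : e b ≠ e b' := fun h => hbb.ne (e.injective h)
  obtain ⟨x, hx, hx1, hx2⟩ := hX3 (e b) (e b') hne s s'
  have hxR := (Finset.mem_filter.1 hx).2
  dsimp only
  rw [← hx1, ← hx2]
  rcases lt_or_gt_of_ne hne with hlt | hlt
  · have := hxR _ _ hlt (by simpa using hbb)
    simpa [K, φ] using this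
  · have := hxR _ _ hlt (by simpa using hbb.symm)
    rw [hK] at this
    simpa [K, φ] using this
end

section
/- Let G and H be graphs, with H having at least one edge, and let r ≥ 2 be an integer such that G →_r H. For every γ > 0 sufficiently small with respect to r, there exists a constant a = a(G,H,r,γ) such that for every positive integer t, the blowup Ramsey number satisfies B_r(G → H; t) ≤ a · b^t with b = r^{(r+γ)^{|E(H)|−1}}, where |E(H)| is the number of edges of H. -/
section BlowupProof

open Finset


open Classical in
noncomputable def edgeCt {A B : Type} (R : A → B → Prop) (X : Finset A) (Y : Finset B) : ℝ :=
  ∑ x ∈ X, ∑ y ∈ Y, if R x y then (1 : ℝ) else 0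

lemma edgeCt_swap {A B : Type} (R : A → B → Prop) (X : Finset A) (Y : Finset B) :
    edgeCt (fun b a => R a b) Y X = edgeCt R X Y := by
  unfold edgeCt
  rw [Finset.sum_comm]

lemma edgeCt_nonneg {A B : Type} (R : A → B → Prop) (X : Finset A) (Y : Finset B) :
    0 ≤ edgeCt R X Y := by
  unfold edgeCt
  exact Finset.sum_nonneg fun _ _ => Finset.sum_nonneg fun _ _ => by split_ifs <;> norm_num

lemma edgeCt_le {A B : Type} (R : A → B → Prop) (X : Finset A) (Y : Finset B) :
    edgeCt R X Y ≤ (#X : ℝ) * #Y := by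
  unfold edgeCt
  calc _ ≤ ∑ x ∈ X, ∑ y ∈ Y, (1 : ℝ) := by
        gcongr; split_ifs <;> norm_num
    _ = _ := by simp

open Classical in
lemma edgeCt_eq_filter {A B : Type} (R : A → B → Prop) (X : Finset A) (Y : Finset B) :
    edgeCt R X Y = ∑ x ∈ X, (#(Y.filter (R x)) : ℝ) := by
  unfold edgeCt
  simp

/-- Kovari-Sos-Turan. -/
lemma kst {A B : Type} (R : A → B → Prop) (X : Finset A) (Y : Finset B) (i j : ℕ) (P : ℝ)
    (hP : 0 < P) (hi : 1 ≤ i) (hj : 1 ≤ j)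
    (he : P * (#X * #Y) ≤ edgeCt R X Y) (hy : 2 * (j : ℝ) ^ 2 ≤ P * #Y)
    (hx : 2 * (i : ℝ) ≤ #X * P ^ j) :
    ∃ S ⊆ X, ∃ T ⊆ Y, #S = i ∧ #T = j ∧ ∀ a ∈ S, ∀ b ∈ T, R a b := by
  classical
  by_contra hcon
  have hj1 : (1 : ℝ) ≤ j := by exact_mod_cast hj
  have hi1 : (1 : ℝ) ≤ i := by exact_mod_cast hi
  have hy0 : (0 : ℝ) < #Y := by
    by_contra h
    have : (#Y : ℝ) = 0 := le_antisymm (not_lt.mp h) (by positivity)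
    rw [this] at hy
    nlinarith
  have hX0 : (0 : ℝ) < #X := by
    by_contra h
    have : (#X : ℝ) = 0 := le_antisymm (not_lt.mp h) (by positivity)
    rw [this] at hx
    nlinarith
  -- W(T)
  have hW : ∀ T ∈ Y.powersetCard j, #(X.filter (fun v => ∀ b ∈ T, R v b)) ≤ i - 1 := by
    intro T hT
    rw [mem_powersetCard] at hT
    by_contra h
    have h' : i ≤ #(X.filter (fun v => ∀ b ∈ T, R v b)) := by omega
    obtain ⟨S, hS, hSc⟩ := Finset.exists_subset_card_eq h'
    exact hcon ⟨S, hS.trans (filter_subset _ _), T, hT.1, hSc, hT.2, fun a ha b hb =>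
      (mem_filter.mp (hS ha)).2 b hb⟩
  have hsum : ∑ T ∈ Y.powersetCard j, #(X.filter (fun v => ∀ b ∈ T, R v b))
      = ∑ v ∈ X, (#(Y.filter (R v))).choose j := by
    simp_rw [card_filter]
    rw [Finset.sum_comm]
    refine Finset.sum_congr rfl fun v _ => ?_
    rw [← card_filter, ← card_filter, ← card_powersetCard]
    congr 1
    ext T
    simp only [mem_filter, mem_powersetCard, subset_iff]
    constructor
    · rintro ⟨⟨h1, h2⟩, h3⟩
      exact ⟨fun b hb => ⟨h1 hb, h3 b hb⟩, h2⟩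
    · rintro ⟨h1, h2⟩
      exact ⟨⟨fun b hb => (h1 hb).1, h2⟩, fun b hb => (h1 hb).2⟩
  have hle : ∑ v ∈ X, (#(Y.filter (R v))).choose j ≤ (#Y).choose j * (i - 1) := by
    rw [← hsum, ← card_powersetCard, ← smul_eq_mul]
    exact Finset.sum_le_card_nsmul _ _ _ hW
  have hle2 : ∑ v ∈ X, (#(Y.filter (R v)) - j) ^ j ≤ (#Y) ^ j * (i - 1) := by
    calc ∑ v ∈ X, (#(Y.filter (R v)) - j) ^ j
        ≤ ∑ v ∈ X, j.factorial * (#(Y.filter (R v))).choose j := by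
          gcongr with v hv
          rw [← Nat.descFactorial_eq_factorial_mul_choose]
          refine le_trans ?_ (Nat.pow_sub_le_descFactorial _ _)
          gcongr
          omega
      _ = j.factorial * ∑ v ∈ X, (#(Y.filter (R v))).choose j := by rw [mul_sum]
      _ ≤ j.factorial * ((#Y).choose j * (i - 1)) := by gcongr
      _ = (#Y).descFactorial j * (i - 1) := by
          rw [Nat.descFactorial_eq_factorial_mul_choose]; ring
      _ ≤ _ := by gcongr; exact Nat.descFactorial_le_pow _ _
  have hle3 : ∑ v ∈ X, ((#(Y.filter (R v)) - j : ℕ) : ℝ) ^ j ≤ (#Y : ℝ) ^ j * (i - 1) := by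
    have := (Nat.cast_le (α := ℝ)).mpr hle2
    push_cast [Nat.cast_sub hi] at this
    exact this
  have hmean : (#X : ℝ) * (P * #Y - j) ≤ ∑ v ∈ X, ((#(Y.filter (R v)) - j : ℕ) : ℝ) := by
    calc (#X : ℝ) * (P * #Y - j) ≤ ∑ v ∈ X, ((#(Y.filter (R v)) : ℝ) - j) := by
          rw [sum_sub_distrib, ← edgeCt_eq_filter]; simp; nlinarith
      _ ≤ _ := by
          gcongr with v hv
          rw [sub_le_iff_le_add]
          norm_cast
          omega
  have hpos : 0 < P * #Y - j := by nlinarith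
  have key : (#X : ℝ) * (P * #Y - j) ^ j ≤ ∑ v ∈ X, ((#(Y.filter (R v)) - j : ℕ) : ℝ) ^ j := by
    have := Real.pow_arith_mean_le_arith_mean_pow X (fun _ => (#X : ℝ)⁻¹)
      (fun v => ((#(Y.filter (R v)) - j : ℕ) : ℝ)) (fun _ _ => by positivity)
      (by simp; field_simp) (fun _ _ => by positivity) j
    rw [← mul_sum, ← mul_sum] at this
    have h2 : P * #Y - j ≤ (#X : ℝ)⁻¹ * ∑ v ∈ X, ((#(Y.filter (R v)) - j : ℕ) : ℝ) := by
      rw [le_inv_mul_iff₀ hX0]; exact hmean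
    have h3 := (pow_le_pow_left₀ hpos.le h2 j).trans this
    rwa [le_inv_mul_iff₀ hX0] at h3
  have hPy : 0 < P * #Y := by positivity
  have bern : (P * #Y) ^ j / 2 ≤ (P * #Y - j) ^ j := by
    have hb := one_add_mul_le_pow (a := -(j / (P * #Y))) (by
      rw [neg_le_neg_iff, div_le_iff₀ hPy]; nlinarith) j
    have h4 : (1 : ℝ) / 2 ≤ 1 + j * -(j / (P * #Y)) := by
      have : (j : ℝ) * (j / (P * #Y)) ≤ 1 / 2 := by
        rw [← mul_div_assoc, div_le_iff₀ hPy]; nlinarith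
      linarith
    have h5 : P * #Y - j = (P * #Y) * (1 + -(j / (P * #Y))) := by
      field_simp; ring
    rw [h5, mul_pow (P * (#Y : ℝ))]
    have : 0 < (P * #Y) ^ j := by positivity
    nlinarith
  have hyj : 0 < (#Y : ℝ) ^ j := by positivity
  have : (#Y : ℝ) ^ j * i ≤ (#Y : ℝ) ^ j * (i - 1) := by
    calc (#Y : ℝ) ^ j * i ≤ (#Y : ℝ) ^ j * (#X * P ^ j / 2) := by gcongr; linarith
      _ = #X * ((P * #Y) ^ j / 2) := by rw [mul_pow]; ring
      _ ≤ #X * (P * #Y - j) ^ j := by gcongr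
      _ ≤ _ := key.trans hle3
  nlinarith

/-- One step of the embedding. -/
lemma step {A B : Type} (R : A → B → Prop) (X : Finset A) (Y : Finset B) (q : ℕ) (p K : ℝ)
    (hp : 0 < p) (hq : 2 ≤ q) (hY : Y.Nonempty) (hX : X.Nonempty) (hK : 0 ≤ K)
    (hpos : 0 < p * (q * (edgeCt R X Y / p) - (q - 1) * (#X * #Y)) - (q - 1) * (#X * K) / p) :
    ∃ v ∈ X, ∃ X' ⊆ X, ∃ Y' ⊆ Y, v ∉ X' ∧ #X' + 1 = #X ∧ (∀ b ∈ Y', R v b) ∧ K ≤ #Y' ∧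
      p * (q * (edgeCt R X Y / p) - (q - 1) * (#X * #Y)) - (q - 1) * (#X * K + #Y) / p ≤
      ((q - 1) * (edgeCt R X' Y' / p) - (q - 2) * (#X' * #Y')) := by
  classical
  have hq2 : (2 : ℝ) ≤ q := by exact_mod_cast hq
  have hx0 : (0 : ℝ) < #X := by exact_mod_cast hX.card_pos
  have hy0 : (0 : ℝ) < #Y := by exact_mod_cast hY.card_pos
  set e := edgeCt R X Y with he
  set N : A → Finset B := fun v => Y.filter (R v) with hN
  have h1 : ∑ v ∈ X, (#(N v) : ℝ) = e := (edgeCt_eq_filter R X Y).symm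
  set d : B → ℝ := fun b => ∑ v ∈ X, if R v b then (1 : ℝ) else 0 with hd
  have h2 : ∑ b ∈ Y, d b = e := by rw [he, edgeCt, Finset.sum_comm]
  have h3 : ∑ v ∈ X, edgeCt R X (N v) = ∑ b ∈ Y, d b ^ 2 := by
    have : ∀ v, edgeCt R X (N v) = ∑ b ∈ Y, (if R v b then d b else 0) := by
      intro v
      rw [edgeCt, Finset.sum_comm, ← Finset.sum_filter]
    simp_rw [this]
    rw [Finset.sum_comm]
    refine Finset.sum_congr rfl fun b _ => ?_
    rw [pow_two]
    conv_rhs => rw [hd]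
    simp only
    rw [Finset.sum_mul]
    refine Finset.sum_congr rfl fun v _ => ?_
    split_ifs <;> simp [hd]
  have h4 : e ^ 2 ≤ #Y * ∑ b ∈ Y, d b ^ 2 := by
    rw [← h2]; exact sq_sum_le_card_mul_sum_sq
  set g : A → ℝ := fun v => (q - 1) * (edgeCt R X (N v) / p) - (q - 2) * (#X * #(N v)) with hg
  set D := p * (q * (e / p) - (q - 1) * (#X * #Y)) with hD
  have h5 : #X * D ≤ ∑ v ∈ X, g v := by
    have : ∑ v ∈ X, g v = (q - 1) * ((∑ b ∈ Y, d b ^ 2) / p) - (q - 2) * (#X * e) := by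
      simp only [hg]
      rw [sum_sub_distrib, ← mul_sum, ← sum_div, h3, ← mul_sum, ← mul_sum, h1]
    rw [this]
    have h6 : e ^ 2 / #Y ≤ ∑ b ∈ Y, d b ^ 2 := by rw [div_le_iff₀ hy0]; linarith
    have h7 : (e ^ 2 / #Y) / p ≤ (∑ b ∈ Y, d b ^ 2) / p := by gcongr
    have h8 : 0 ≤ (e - p * #X * #Y) ^ 2 / (p * #Y) := by positivity
    have h9 : (e - p * #X * #Y) ^ 2 / (p * #Y) = (e ^ 2 / #Y) / p - 2 * #X * e + p * #X ^ 2 * #Y := by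
      field_simp; ring
    have h10 : D = q * e - (q - 1) * p * (#X * #Y) := by rw [hD]; field_simp
    rw [h10]
    nlinarith
  -- choose a good vertex
  have h6 : ∃ v ∈ X, K ≤ #(N v) ∧ D - (q - 1) * (#X * K) / p ≤ g v := by
    by_contra hcon
    push Not at hcon
    have : ∑ v ∈ X, g v < ∑ v ∈ X, D := by
      refine Finset.sum_lt_sum_of_nonempty hX fun v hv => ?_
      rcases le_or_gt K #(N v) with h | h
      · have := hcon v hv h
        have : 0 ≤ (q - 1) * (#X * K) / p := by
          apply div_nonneg _ hp.le
          apply mul_nonneg <;> [linarith; positivity]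
        linarith
      · have h7 : edgeCt R X (N v) ≤ #X * K := by
          refine (edgeCt_le _ _ _).trans ?_
          gcongr
        have h8 : (q - 1) * (edgeCt R X (N v) / p) ≤ (q - 1) * (#X * K) / p := by
          rw [mul_div_assoc]
          gcongr
          linarith
        have h9 : 0 ≤ ((q : ℝ) - 2) * (#X * #(N v)) := by
          apply mul_nonneg <;> [linarith; positivity]
        simp only [hg]
        linarith
    rw [sum_const, nsmul_eq_mul] at this
    linarith
  obtain ⟨v, hv, hvK, hvg⟩ := h6
  refine ⟨v, hv, X.erase v, erase_subset _ _, N v, filter_subset _ _, notMem_erase _ _,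
    card_erase_add_one hv, fun b hb => (mem_filter.mp hb).2, hvK, ?_⟩
  have h7 : edgeCt R X (N v) ≤ edgeCt R (X.erase v) (N v) + #Y := by
    have : edgeCt R X (N v) = edgeCt R (X.erase v) (N v) +
        ∑ y ∈ N v, if R v y then (1 : ℝ) else 0 := by
      unfold edgeCt
      rw [← Finset.sum_erase_add _ _ hv]
    rw [this]
    gcongr
    calc _ ≤ ∑ y ∈ N v, (1 : ℝ) := by gcongr; split_ifs <;> norm_num
      _ = #(N v) := by simp
      _ ≤ _ := by exact_mod_cast card_le_card (filter_subset _ _)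
  have h8 : (q - 1) * (edgeCt R X (N v) / p) ≤
      (q - 1) * (edgeCt R (X.erase v) (N v) / p) + (q - 1) * #Y / p := by
    rw [mul_div_assoc, ← mul_add, ← add_div]
    gcongr
    try linarith
  have h9 : ((q : ℝ) - 2) * (#(X.erase v) * #(N v)) ≤ (q - 2) * (#X * #(N v)) := by
    have : (#(X.erase v) : ℝ) ≤ #X := by exact_mod_cast card_le_card (erase_subset _ _)
    gcongr
    try linarith
  have h10 : (q - 1) * (#X * K + #Y) / p = (q - 1) * (#X * K) / p + (q - 1) * #Y / p := by ring
  rw [h10]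
  simp only [hg] at hvg
  linarith

set_option maxHeartbeats 2000000 in
/-- The non-winning case of the induction in `core`, purely numerical. -/
lemma core_loss (p s x y P z K : ℝ) (i j q c0 : ℕ) (hs : 0 < s) (hs1 : s < 1) (hps : p = s ^ 4)
    (hp : 0 < p) (hp1 : p < 1)
    (hc1 : ∀ q : ℕ, c0 ≤ q → 4 * (q : ℝ) ^ 3 * s ^ (2 * q) < p)
    (hc2 : ∀ q : ℕ, c0 ≤ q → 320 * (q : ℝ) ^ 8 * s ^ (q - 1) ≤ p ^ 3)
    (hij : i + j = q) (hji : j ≤ i) (hij1 : i ≤ j + 1) (hq2r : (2 : ℝ) ≤ q)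
    (hj1 : (1 : ℝ) ≤ j) (hi1 : (1 : ℝ) ≤ i) (hijr : (i : ℝ) + j = q)
    (hx0 : 0 < x) (hy0 : 0 < y) (hPle : P ≤ 1) (hPz : P = p * (1 + z)) (hP0 : 0 < P)
    (hz0 : 0 < 1 + q * z) (hzhalf : -(1 / 2) ≤ z)
    (hPq : 1 + 4 * (c0 : ℝ) ^ 2 ≤ x * y * P ^ q)
    (hΨ1' : 1 ≤ p ^ q * (x * y) * (1 + q * z))
    (hw1 : x * P ^ j < 2 * (i : ℝ)) (hw2 : y * P ^ i < 2 * (j : ℝ))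
    (hK : K = 4 * (j : ℝ) ^ 2 / p) :
    c0 < q ∧ p ^ q * ((q - 1) * (x * K + y) / p ^ 2) ≤ 1 / ((q : ℝ) - 1) - 1 / q := by
  have hprod : x * y * P ^ q = (x * P ^ j) * (y * P ^ i) := by rw [← hij, pow_add]; ring
  have hlt : x * y * P ^ q < 4 * (q : ℝ) ^ 2 := by
    rw [hprod]
    have : (x * P ^ j) * (y * P ^ i) < (2 * i) * (2 * j) := by
      apply mul_lt_mul'' hw1 hw2 <;> positivity
    have h2 : (i : ℝ) * j ≤ q * q := by
      apply mul_le_mul <;> linarith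
    nlinarith
  have hqc : c0 < q := by
    by_contra h
    have : (q : ℝ) ≤ c0 := by exact_mod_cast not_lt.mp h
    nlinarith
  have hxyp : x * y * p ^ q ≤ 32 * (q : ℝ) ^ 2 := by
    have h1 : (1 : ℝ) / 8 ≤ (1 + z) ^ q := by
      have h2 : (1 + 1 / ((q : ℝ) - 1)) ^ q ≤ 8 := by
        have hq1 : (0 : ℝ) < q - 1 := by linarith
        calc (1 + 1 / ((q : ℝ) - 1)) ^ q ≤ (Real.exp (1 / ((q : ℝ) - 1))) ^ q := by
              gcongr
              rw [add_comm]; exact Real.add_one_le_exp _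
          _ = Real.exp (q * (1 / ((q : ℝ) - 1))) := by rw [← Real.exp_nat_mul]
          _ ≤ Real.exp 2 := by
              apply Real.exp_le_exp.mpr
              rw [mul_one_div, div_le_iff₀ hq1]; linarith
          _ = Real.exp 1 * Real.exp 1 := by rw [← Real.exp_add]; norm_num
          _ ≤ 8 := by
              have := Real.exp_one_lt_d9
              have := Real.exp_pos 1
              nlinarith
      have h3 : 1 ≤ (1 + z) ^ q * (1 + 1 / ((q : ℝ) - 1)) ^ q := by
        rw [← mul_pow]
        apply one_le_pow₀
        have hq1 : (0 : ℝ) < q - 1 := by linarith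
        have h5 : 1 + 1 / ((q : ℝ) - 1) = q / (q - 1) := by field_simp; ring
        rw [h5, mul_div_assoc', le_div_iff₀ hq1]
        nlinarith
      have h4 : 0 < (1 + z) ^ q := pow_pos (by linarith) _
      nlinarith
    have h2 : P ^ q = p ^ q * (1 + z) ^ q := by rw [hPz, mul_pow]
    rw [h2] at hlt
    have : 0 < x * y * p ^ q := by positivity
    nlinarith
  have hPs : P ≤ s ^ 2 := by
    by_contra h
    push Not at h
    have h1 : s ^ (2 * q) ≤ P ^ q := by rw [pow_mul]; gcongr
    have h2 : p ^ q = s ^ (2 * q) * s ^ (2 * q) := by rw [hps, ← pow_mul, ← pow_add]; ring_nf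
    have h3 : 1 + q * z ≤ q / p := by
      rw [le_div_iff₀ hp]
      have : p * (1 + z) ≤ 1 := by rw [← hPz]; exact hPle
      nlinarith
    have h4 : p ≤ x * y * p ^ q * q := by
      have : 1 ≤ p ^ q * (x * y) * (q / p) := by
        refine hΨ1'.trans ?_
        gcongr
      rw [mul_div_assoc', le_div_iff₀ hp] at this
      linarith
    have h5 := hc1 q hqc.le
    have h6 : x * y * p ^ q ≤ 4 * (q : ℝ) ^ 2 * s ^ (2 * q) := by
      rw [h2]
      have : 0 < s ^ (2 * q) := by positivity
      have h7 : x * y * s ^ (2 * q) ≤ x * y * P ^ q := by gcongr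
      nlinarith
    have : x * y * p ^ q * q ≤ 4 * (q : ℝ) ^ 2 * s ^ (2 * q) * q := by gcongr
    nlinarith
  have hjq : q - 1 ≤ 2 * j := by omega
  have hiq : q - 1 ≤ 2 * i := by omega
  obtain ⟨σ, hσ⟩ : ∃ σ, σ = s ^ (q - 1) := ⟨_, rfl⟩
  have hσ0 : 0 < σ := by rw [hσ]; positivity
  have hPj : P ^ j ≤ σ := by
    calc P ^ j ≤ (s ^ 2) ^ j := by gcongr
      _ = s ^ (2 * j) := by rw [pow_mul]
      _ ≤ σ := hσ ▸ pow_le_pow_of_le_one hs.le hs1.le hjq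
  have hPi : P ^ i ≤ σ := by
    calc P ^ i ≤ (s ^ 2) ^ i := by gcongr
      _ = s ^ (2 * i) := by rw [pow_mul]
      _ ≤ σ := hσ ▸ pow_le_pow_of_le_one hs.le hs1.le hiq
  have hab : 1 ≤ (x * P ^ j) * (y * P ^ i) := by rw [← hprod]; nlinarith
  have hxinv : 1 / x ≤ 2 * q * σ := by
    rw [div_le_iff₀ hx0]
    have h1 : (x * P ^ j) * (y * P ^ i) ≤ (x * σ) * (2 * q) := by
      apply mul_le_mul _ (by linarith) (by positivity) (by positivity)
      gcongr
    nlinarith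
  have hyinv : 1 / y ≤ 2 * q * σ := by
    rw [div_le_iff₀ hy0]
    have h1 : (x * P ^ j) * (y * P ^ i) ≤ (2 * q) * (y * σ) := by
      apply mul_le_mul (by linarith) _ (by positivity) (by positivity)
      gcongr
    nlinarith
  have hK0 : 0 ≤ K := by rw [hK]; positivity
  have hKq : K + 1 ≤ 5 * (q : ℝ) ^ 2 / p := by
    rw [hK, le_div_iff₀ hp, add_mul, div_mul_cancel₀ _ hp.ne']
    nlinarith
  refine ⟨hqc, ?_⟩
  show p ^ q * ((q - 1) * (x * K + y) / p ^ 2) ≤ 1 / ((q : ℝ) - 1) - 1 / q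
  have h1 : x * K + y = x * y * (K * (1 / y) + 1 / x) := by field_simp
  have h2 : K * (1 / y) + 1 / x ≤ (K + 1) * (2 * q * σ) := by
    nlinarith
  have h3 : K * (1 / y) + 1 / x ≤ 5 * (q : ℝ) ^ 2 / p * (2 * q * σ) := by
    refine h2.trans ?_
    gcongr
  have hc := hc2 q hqc.le
  rw [← hσ] at hc
  have hq1 : (0 : ℝ) < q - 1 := by linarith
  calc p ^ q * ((q - 1) * (x * K + y) / p ^ 2)
      = (x * y * p ^ q) * (q - 1) * (K * (1 / y) + 1 / x) / p ^ 2 := by rw [h1]; ring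
    _ ≤ (32 * (q : ℝ) ^ 2) * q * (5 * (q : ℝ) ^ 2 / p * (2 * q * σ)) / p ^ 2 := by
        have : (q : ℝ) - 1 ≤ q := by linarith
        gcongr
    _ = 320 * (q : ℝ) ^ 8 * σ / p ^ 3 / q ^ 2 := by field_simp; ring
    _ ≤ 1 / q ^ 2 := by
        gcongr
        rw [div_le_one (by positivity)]
        exact hc
    _ ≤ 1 / (q * (q - 1)) := by
        apply one_div_le_one_div_of_le (by positivity)
        nlinarith
    _ = _ := by field_simp; ring

set_option maxHeartbeats 2000000 in
lemma core (p s : ℝ) (hs : 0 < s) (hs1 : s < 1) (hps : p = s ^ 4) (c0 : ℕ) (hc4 : 4 ≤ c0)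
    (hc1 : ∀ q : ℕ, c0 ≤ q → 4 * (q : ℝ) ^ 3 * s ^ (2 * q) < p)
    (hc2 : ∀ q : ℕ, c0 ≤ q → 320 * (q : ℝ) ^ 8 * s ^ (q - 1) ≤ p ^ 3) (q : ℕ) :
    ∀ (A B : Type) (R : A → B → Prop) (X : Finset A) (Y : Finset B) (i j : ℕ),
      i + j = q → j ≤ i → i ≤ j + 1 → 1 ≤ j → 4 * (i : ℝ) ^ 2 ≤ p * #X →
      4 * (j : ℝ) ^ 2 ≤ p * #Y →
      4 * (c0 : ℝ) ^ 2 + 2 - 1 / q ≤ p ^ q * (q * (edgeCt R X Y / p) - (q - 1) * (#X * #Y)) →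
      ∃ S ⊆ X, ∃ T ⊆ Y, #S = i ∧ #T = j ∧ ∀ a ∈ S, ∀ b ∈ T, R a b := by
  classical
  have hp : 0 < p := by rw [hps]; positivity
  have hp1 : p < 1 := by rw [hps]; exact pow_lt_one₀ hs.le hs1 (by norm_num)
  induction q with
  | zero => intro A B R X Y i j h1 h2 h3 h4; omega
  | succ q' ih =>
  intro A B R X Y i j hij hji hij1 hj hX hY hPsi
  set q := q' + 1 with hqdef
  clear_value q
  have hq2 : 2 ≤ q := by omega
  have hq2r : (2 : ℝ) ≤ q := by exact_mod_cast hq2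
  have hj1 : (1 : ℝ) ≤ j := by exact_mod_cast hj
  have hi1 : (1 : ℝ) ≤ i := by exact_mod_cast hj.trans hji
  have hijr : (i : ℝ) + j = q := by exact_mod_cast hij
  have hx0 : (0 : ℝ) < #X := by
    have : 0 < p * #X := by nlinarith
    exact (pos_iff_pos_of_mul_pos this).mp hp
  have hy0 : (0 : ℝ) < #Y := by
    have : 0 < p * #Y := by nlinarith
    exact (pos_iff_pos_of_mul_pos this).mp hp
  set x : ℝ := ((#X : ℕ) : ℝ) with hx
  clear_value x
  set y : ℝ := ((#Y : ℕ) : ℝ) with hy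
  clear_value y
  set e := edgeCt R X Y with he
  clear_value e
  set P := e / (x * y) with hPdef
  clear_value P
  have hexy : e = P * (x * y) := by rw [hPdef]; field_simp
  have hPle : P ≤ 1 := by
    rw [hPdef, div_le_one (by positivity), he, hx, hy]; exact edgeCt_le _ _ _
  set z := P / p - 1 with hz
  clear_value z
  have hPz : P = p * (1 + z) := by rw [hz]; field_simp; ring
  set Ψ := p ^ q * (q * (e / p) - (q - 1) * (x * y)) with hΨ
  clear_value Ψ
  have hΨ2 : Ψ = p ^ q * (x * y) * (1 + q * z) := by
    rw [hΨ, hexy, hPz]; field_simp; ring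
  have hqinv : (1 : ℝ) / q ≤ 1 := by rw [div_le_one (by linarith)]; linarith
  have hΨ1 : 1 + 4 * (c0 : ℝ) ^ 2 ≤ Ψ := by linarith
  have hΨ1' : 1 ≤ Ψ := by nlinarith
  have hz0 : 0 < 1 + q * z := by
    have : 0 < p ^ q * (x * y) * (1 + q * z) := by rw [← hΨ2]; linarith
    exact (pos_iff_pos_of_mul_pos this).mp (by positivity)
  have hzq : -(1 / q) ≤ z := by
    rw [neg_le_iff_add_nonneg]
    have : z + 1 / q = (1 + q * z) / q := by field_simp; ring
    rw [this]; positivity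
  have hzhalf : -(1 / 2) ≤ z := by
    have : (1 : ℝ) / q ≤ 1 / 2 := by gcongr
    linarith
  have hPhalf : p / 2 ≤ P := by rw [hPz]; nlinarith
  have hP0 : 0 < P := by linarith
  have hPq : Ψ ≤ x * y * P ^ q := by
    have hb := one_add_mul_le_pow (a := z) (by linarith) q
    rw [hΨ2, hPz, mul_pow]
    have : 0 < p ^ q * (x * y) := by positivity
    nlinarith
  by_cases hw1 : 2 * (i : ℝ) ≤ x * P ^ j
  · refine kst R X Y i j P hP0 (hj.trans hji) hj (by rw [← hx, ← hy, ← he]; exact hexy.ge) ?_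
      (by rw [← hx]; exact hw1)
    rw [← hy]
    have : p / 2 * y ≤ P * y := by gcongr
    linarith
  by_cases hw2 : 2 * (j : ℝ) ≤ y * P ^ i
  · obtain ⟨T, hT, S, hS, hTc, hSc, hTS⟩ := kst (fun b a => R a b) Y X j i P hP0 hj (hj.trans hji)
      (by rw [edgeCt_swap, ← he, ← hx, ← hy, hexy, mul_comm x y]) (by
        rw [← hx]
        have : p / 2 * x ≤ P * x := by gcongr
        linarith) (by rw [← hy]; exact hw2)
    exact ⟨S, hS, T, hT, hSc, hTc, fun a ha b hb => hTS b hb a ha⟩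
  push Not at hw1 hw2
  obtain ⟨K, hK⟩ : ∃ K : ℝ, K = 4 * (j : ℝ) ^ 2 / p := ⟨_, rfl⟩
  obtain ⟨hqc, hloss⟩ := core_loss p s x y P z K i j q c0 hs hs1 hps hp hp1 hc1 hc2 hij hji hij1
    hq2r hj1 hi1 hijr hx0 hy0 hPle hPz hP0 hz0 hzhalf (by linarith) (by rw [← hΨ2]; exact hΨ1')
    hw1 hw2 hK
  have hlosshalf : 1 / ((q : ℝ) - 1) - 1 / q ≤ 1 / 2 := by
    have h1 : 1 / ((q : ℝ) - 1) ≤ 1 / 2 := by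
      apply one_div_le_one_div_of_le (by norm_num)
      have : (4 : ℝ) < q := by exact_mod_cast hc4.trans_lt hqc
      linarith
    have : (0 : ℝ) ≤ 1 / q := by positivity
    linarith
  have hK0 : 0 ≤ K := by rw [hK]; positivity
  set D := (q * (e / p) - (q - 1) * (x * y)) with hD
  clear_value D
  have hstep := step R X Y q p K hp hq2 (card_pos.mp (by rw [hy] at hy0; exact_mod_cast hy0))
    (card_pos.mp (by rw [hx] at hx0; exact_mod_cast hx0)) hK0 (by
      rw [← he, ← hx, ← hy, ← hD]
      have h1 : p ^ q * ((q - 1) * (x * K) / p ^ 2) ≤ p ^ q * ((q - 1) * (x * K + y) / p ^ 2) := by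
        have hq1 : (0 : ℝ) ≤ q - 1 := by linarith
        gcongr
        linarith
      have h2 : 0 < p ^ q * D - p ^ q * ((q - 1) * (x * K) / p ^ 2) := by
        rw [← hΨ]; linarith
      have h3 : p ^ q * D - p ^ q * ((q - 1) * (x * K) / p ^ 2) =
          p ^ q / p * (p * D - (q - 1) * (x * K) / p) := by field_simp
      rw [h3] at h2
      exact (pos_iff_pos_of_mul_pos h2).mp (by positivity))
  obtain ⟨v, hv, X', hX', Y', hY', hvX', hcard, hvY, hKY, hG⟩ := hstep
  rw [← he, ← hx, ← hy, ← hD] at hG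
  have hq'r : (q' : ℝ) = q - 1 := by rw [hqdef]; push_cast; ring
  have hPsi' : 4 * (c0 : ℝ) ^ 2 + 2 - 1 / q' ≤
      p ^ q' * (q' * (edgeCt R X' Y' / p) - (q' - 1) * (#X' * #Y')) := by
    have h1 : p ^ q' * (p * D - (q - 1) * (x * K + y) / p) ≤
      p ^ q' * ((q - 1) * (edgeCt R X' Y' / p) - (q - 2) * (#X' * #Y')) := by gcongr
    have h2 : p ^ q' * (p * D - (q - 1) * (x * K + y) / p) =
        Ψ - p ^ q * ((q - 1) * (x * K + y) / p ^ 2) := by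
      rw [hΨ, hqdef, pow_succ]; field_simp
    rw [h2] at h1
    have h3 : (q' : ℝ) - 1 = q - 2 := by rw [hq'r]; ring
    rw [h3, hq'r]
    linarith
  have hX'r : (#X' : ℝ) = x - 1 := by
    rw [hx, ← hcard]; push_cast; ring
  have hYc : 4 * (j : ℝ) ^ 2 ≤ p * #Y' := by
    rw [hK, div_le_iff₀ hp] at hKY; linarith
  have hi2 : 2 ≤ i := by omega
  have hXc : 4 * ((i - 1 : ℕ) : ℝ) ^ 2 ≤ p * #X' := by
    rw [hX'r, Nat.cast_sub (by omega)]
    push_cast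
    nlinarith
  have fin : (∃ S ⊆ X', ∃ T ⊆ Y', #S = i - 1 ∧ #T = j ∧ ∀ a ∈ S, ∀ b ∈ T, R a b) →
      ∃ S ⊆ X, ∃ T ⊆ Y, #S = i ∧ #T = j ∧ ∀ a ∈ S, ∀ b ∈ T, R a b := by
    rintro ⟨S, hS, T, hT, hSc, hTc, hST⟩
    refine ⟨insert v S, ?_, T, hT.trans hY', ?_, hTc, ?_⟩
    · exact insert_subset hv (hS.trans hX')
    · rw [card_insert_of_notMem (fun h => hvX' (hS h)), hSc]; omega
    · intro a ha b hb
      rcases mem_insert.mp ha with rfl | ha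
      · exact hvY b (hT hb)
      · exact hST a ha b hb
  apply fin
  rcases Nat.lt_or_ge j i with h | h
  · exact ih A B R X' Y' (i - 1) j (by omega) (by omega) (by omega) hj hXc hYc hPsi'
  · obtain ⟨T, hT, S, hS, hTc, hSc, hTS⟩ := ih B A (fun b a => R a b) Y' X' j (i - 1) (by omega)
      (by omega) (by omega) (by omega) hYc hXc (by
        rw [edgeCt_swap, mul_comm (#Y' : ℝ)]; exact hPsi')
    exact ⟨S, hS, T, hT, hSc, hTc, fun a ha b hb => hTS b hb a ha⟩

/-- Kovari-Sos-Turan without the extra factor `t`. -/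
lemma sharp_kst (p : ℝ) (hp : 0 < p) (hp1 : p < 1) : ∃ a : ℝ, 0 < a ∧ ∀ t : ℕ, 1 ≤ t →
    ∀ (A B : Type) (R : A → B → Prop) (X : Finset A) (Y : Finset B),
      a * (p⁻¹) ^ t ≤ #X → a * (p⁻¹) ^ t ≤ #Y → p * (#X * #Y) ≤ edgeCt R X Y →
      ∃ S ⊆ X, ∃ T ⊆ Y, #S = t ∧ #T = t ∧ ∀ a ∈ S, ∀ b ∈ T, R a b := by
  set s := Real.sqrt (Real.sqrt p) with hs
  have hs0 : 0 < s := Real.sqrt_pos.mpr (Real.sqrt_pos.mpr hp)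
  have hps : p = s ^ 4 := by
    rw [show s ^ 4 = (s ^ 2) ^ 2 by ring, hs, Real.sq_sqrt (Real.sqrt_nonneg _), Real.sq_sqrt hp.le]
  have hs1 : s < 1 := by
    by_contra h
    push Not at h
    have : 1 ≤ s ^ 4 := one_le_pow₀ h
    linarith
  have e1 : ∀ᶠ q : ℕ in Filter.atTop, 4 * (q : ℝ) ^ 3 * s ^ (2 * q) < p := by
    have h := (tendsto_pow_const_mul_const_pow_of_abs_lt_one 3 (r := s ^ 2) (by
      rw [abs_of_pos (by positivity)]; exact pow_lt_one₀ hs0.le hs1 (by norm_num))).const_mul 4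
    rw [mul_zero] at h
    filter_upwards [h.eventually_lt_const hp] with q hq
    rw [pow_mul, mul_assoc]; exact hq
  have e2 : ∀ᶠ q : ℕ in Filter.atTop, 320 * (q : ℝ) ^ 8 * s ^ (q - 1) ≤ p ^ 3 := by
    have h := (tendsto_pow_const_mul_const_pow_of_abs_lt_one 8 (r := s) (by
      rw [abs_of_pos (by positivity)]; exact hs1)).const_mul 320
    rw [mul_zero] at h
    filter_upwards [h.eventually_lt_const (show 0 < p ^ 3 * s by positivity),
      Filter.eventually_ge_atTop 1] with q hq hq1
    have : s ^ q = s ^ (q - 1) * s := by rw [← pow_succ]; congr; omega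
    rw [this] at hq
    nlinarith
  obtain ⟨c0, hc0⟩ := Filter.eventually_atTop.mp (e1.and (e2.and (Filter.eventually_ge_atTop 4)))
  obtain ⟨C, hC⟩ : ∃ C : ℝ, ∀ t : ℕ, (t : ℝ) ^ 2 * p ^ t ≤ C := by
    obtain ⟨C, hC⟩ := (tendsto_pow_const_mul_const_pow_of_abs_lt_one 2 (r := p) (by
      rw [abs_of_pos (by positivity)]; exact hp1)).bddAbove_range
    exact ⟨C, fun t => hC ⟨t, rfl⟩⟩
  have hC0 : 0 ≤ C := by have := hC 0; simpa using this
  refine ⟨4 * (c0 : ℝ) ^ 2 + 2 + 4 * C / p, by positivity, ?_⟩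
  intro t ht A B R X Y hX hY he
  have ht1 : (1 : ℝ) ≤ t := by exact_mod_cast ht
  have hpt : 0 < p ^ t := by positivity
  set a := 4 * (c0 : ℝ) ^ 2 + 2 + 4 * C / p with ha
  have hCp : 0 ≤ 4 * C / p := by positivity
  have hbig : ∀ N : ℕ, a * (p⁻¹) ^ t ≤ N → a ≤ N * p ^ t ∧ 4 * (t : ℝ) ^ 2 ≤ p * N := by
    intro N hN
    have h1 : a ≤ N * p ^ t := by
      rw [inv_pow, ← div_eq_mul_inv, div_le_iff₀ hpt] at hN; exact hN
    refine ⟨h1, ?_⟩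
    have h2 : 4 * C / p ≤ N * p ^ t := by nlinarith
    rw [div_le_iff₀ hp] at h2
    have h3 := hC t
    have h4 : 4 * (t : ℝ) ^ 2 * p ^ t ≤ p * N * p ^ t := by nlinarith
    exact le_of_mul_le_mul_right h4 hpt
  have bX := hbig _ hX
  have bY := hbig _ hY
  refine core p s hs0 hs1 hps c0 (hc0 c0 le_rfl).2.2 (fun q hq => (hc0 q hq).1)
    (fun q hq => (hc0 q hq).2.1) (t + t) A B R X Y t t rfl le_rfl (by omega) ht bX.2 bY.2 ?_
  have h1 : (#X : ℝ) * #Y ≤ ((t + t : ℕ) : ℝ) * (edgeCt R X Y / p)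
      - (((t + t : ℕ) : ℝ) - 1) * (#X * #Y) := by
    have : (#X : ℝ) * #Y ≤ edgeCt R X Y / p := by rw [le_div_iff₀ hp]; linarith
    have h2 : (0 : ℝ) ≤ ((t + t : ℕ) : ℝ) := by positivity
    nlinarith
  have h2 : p ^ (t + t) * ((#X : ℝ) * #Y) = (#X * p ^ t) * (#Y * p ^ t) := by rw [pow_add]; ring
  have ha2 : 2 ≤ a := by nlinarith
  have h3 : a * a ≤ (#X * p ^ t) * (#Y * p ^ t) := by
    apply mul_le_mul bX.1 bY.1 <;> nlinarith
  have h4 : p ^ (t + t) * ((#X : ℝ) * #Y) ≤ p ^ (t + t) * (((t + t : ℕ) : ℝ) * (edgeCt R X Y / p)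
      - (((t + t : ℕ) : ℝ) - 1) * (#X * #Y)) := by gcongr
  have h5 : (0 : ℝ) ≤ 1 / ((t + t : ℕ) : ℝ) := by positivity
  have h6 : 4 * (c0 : ℝ) ^ 2 + 2 ≤ a := by linarith
  nlinarith

/-- Lower regularity of a pair. -/
def LowReg {A B : Type} (R : A → B → Prop) (μ δ : ℝ) (X : Finset A) (Y : Finset B) : Prop :=
  ∀ X' ⊆ X, ∀ Y' ⊆ Y, μ * #X ≤ #X' → μ * #Y ≤ #Y' → δ * ((#X' : ℝ) * #Y') ≤ edgeCt R X' Y'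

lemma LowReg.swap {A B : Type} {R : A → B → Prop} {μ δ : ℝ} {X : Finset A} {Y : Finset B}
    (h : LowReg R μ δ X Y) : LowReg (fun b a => R a b) μ δ Y X := by
  intro Y' hY X' hX h1 h2
  rw [edgeCt_swap, mul_comm (#Y' : ℝ)]
  exact h X' hX Y' hY h2 h1

lemma LowReg.mono {A B : Type} {R : A → B → Prop} {μ μ' l δ : ℝ} {X X1 : Finset A}
    {Y Y1 : Finset B} (h : LowReg R μ' δ X Y) (hμ : μ' ≤ μ * l) (hμ0 : 0 ≤ μ) (hX : X1 ⊆ X)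
    (hY : Y1 ⊆ Y) (hX1 : l * #X ≤ #X1) (hY1 : l * #Y ≤ #Y1) : LowReg R μ δ X1 Y1 := by
  intro X' hX' Y' hY' h1 h2
  refine h X' (hX'.trans hX) Y' (hY'.trans hY) ?_ ?_
  · calc μ' * #X ≤ μ * l * #X := by gcongr
      _ = μ * (l * #X) := by ring
      _ ≤ μ * #X1 := by gcongr
      _ ≤ _ := h1
  · calc μ' * #Y ≤ μ * l * #Y := by gcongr
      _ = μ * (l * #Y) := by ring
      _ ≤ μ * #Y1 := by gcongr
      _ ≤ _ := h2

lemma edgeCt_split {A B : Type} [DecidableEq A] [DecidableEq B] (R : A → B → Prop)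
    {X X' : Finset A} {Y Y' : Finset B} (hX : X' ⊆ X) (hY : Y' ⊆ Y) :
    edgeCt R X Y = edgeCt R X' Y' + edgeCt R (X \ X') Y + edgeCt R X' (Y \ Y') := by
  have h1 : edgeCt R X Y = edgeCt R (X \ X') Y + edgeCt R X' Y := by
    unfold edgeCt; rw [Finset.sum_sdiff hX]
  have h2 : edgeCt R X' Y = edgeCt R X' (Y \ Y') + edgeCt R X' Y' := by
    unfold edgeCt
    rw [← Finset.sum_add_distrib]
    refine Finset.sum_congr rfl fun x _ => ?_
    rw [Finset.sum_sdiff hY]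
  rw [h1, h2]; ring

lemma rpow_le_add (u κ : ℝ) (hu : 0 ≤ u) (hκ : 0 < κ) (hκ1 : κ < 1) : u ^ (1 - κ) ≤ u + κ := by
  have := Real.geom_mean_le_arith_mean2_weighted (w₁ := 1 - κ) (w₂ := κ) (p₁ := u) (p₂ := 1)
    (by linarith) hκ.le hu zero_le_one (by ring)
  rw [Real.one_rpow] at this
  nlinarith

lemma lowreg_pair {A B : Type} (R : A → B → Prop) (X : Finset A) (Y : Finset B)
    (hX : X.Nonempty) (hY : Y.Nonempty) (θ ε μ κ : ℝ) (hθ : 0 < θ) (hε : 0 < ε) (hε1 : ε ≤ 1)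
    (hμ : 0 < μ) (hμ1 : μ ≤ 1) (hκ : κ = ε * μ ^ 2 / 2)
    (he : θ * ((#X : ℝ) * #Y) ≤ edgeCt R X Y) :
    ∃ X1 ⊆ X, ∃ Y1 ⊆ Y, X1.Nonempty ∧ Y1.Nonempty ∧ θ ^ (1 / κ) * #X ≤ #X1 ∧
      θ ^ (1 / κ) * #Y ≤ #Y1 ∧ LowReg R μ (θ * (1 - ε)) X1 Y1 := by
  classical
  have hκ0 : 0 < κ := by rw [hκ]; positivity
  have hμ2 : μ ^ 2 ≤ 1 := pow_le_one₀ hμ.le hμ1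
  have hκ1 : κ < 1 := by rw [hκ]; nlinarith
  let F := (X.powerset.filter Finset.Nonempty) ×ˢ (Y.powerset.filter Finset.Nonempty)
  have hF : ∀ Z : Finset A × Finset B, Z ∈ F ↔
      (Z.1 ⊆ X ∧ Z.1.Nonempty) ∧ (Z.2 ⊆ Y ∧ Z.2.Nonempty) := by
    intro Z; simp [F]
  obtain ⟨⟨X1, Y1⟩, hZ, hmax⟩ := Finset.exists_max_image F
    (fun Z => edgeCt R Z.1 Z.2 * ((#Z.1 : ℝ) * #Z.2) ^ (κ - 1)) ⟨(X, Y), by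
      rw [hF]; exact ⟨⟨Subset.rfl, hX⟩, ⟨Subset.rfl, hY⟩⟩⟩
  rw [hF] at hZ
  obtain ⟨⟨hX1, hX1n⟩, hY1, hY1n⟩ := hZ
  simp only at hmax hX1 hX1n hY1 hY1n
  have x0 : (0 : ℝ) < #X := by exact_mod_cast hX.card_pos
  have y0 : (0 : ℝ) < #Y := by exact_mod_cast hY.card_pos
  have x1 : (0 : ℝ) < #X1 := by exact_mod_cast hX1n.card_pos
  have y1 : (0 : ℝ) < #Y1 := by exact_mod_cast hY1n.card_pos
  have x10 : (#X1 : ℝ) ≤ #X := by exact_mod_cast card_le_card hX1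
  have y10 : (#Y1 : ℝ) ≤ #Y := by exact_mod_cast card_le_card hY1
  have hrp : ∀ w : ℝ, 0 < w → w * w ^ (κ - 1) = w ^ κ := by
    intro w hw
    rw [Real.rpow_sub_one hw.ne']; field_simp
  -- the value at the maximum
  have hM := hmax (X, Y) (by rw [hF]; exact ⟨⟨Subset.rfl, hX⟩, ⟨Subset.rfl, hY⟩⟩)
  simp only at hM
  obtain ⟨w, hw⟩ : ∃ w : ℝ, w = (#X1 : ℝ) * #Y1 := ⟨_, rfl⟩
  obtain ⟨w0, hw0⟩ : ∃ w0 : ℝ, w0 = (#X : ℝ) * #Y := ⟨_, rfl⟩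
  have hwpos : 0 < w := by rw [hw]; positivity
  have hw0pos : 0 < w0 := by rw [hw0]; positivity
  have hww0 : w ≤ w0 := by rw [hw, hw0]; gcongr
  obtain ⟨e, hedef⟩ : ∃ e : ℝ, e = edgeCt R X1 Y1 := ⟨_, rfl⟩
  rw [← hw, ← hw0, ← hedef] at hM
  have hM2 : θ * w0 ^ κ ≤ e * w ^ (κ - 1) := by
    refine le_trans ?_ hM
    rw [← hrp w0 hw0pos, ← mul_assoc]
    have : 0 < w0 ^ (κ - 1) := Real.rpow_pos_of_pos hw0pos _
    rw [← hw0] at he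
    gcongr
  have hed : e * w ^ (κ - 1) = e / w * w ^ κ := by
    rw [← hrp w hwpos]; field_simp
  have hele : e ≤ w := by rw [hedef, hw]; exact edgeCt_le _ _ _
  have hwk : w ^ κ ≤ w0 ^ κ := Real.rpow_le_rpow hwpos.le hww0 hκ0.le
  have hwkpos : 0 < w ^ κ := Real.rpow_pos_of_pos hwpos _
  have he0 : 0 ≤ e := by rw [hedef]; exact edgeCt_nonneg _ _ _
  have hd : θ ≤ e / w := by
    rw [hed] at hM2
    have h1 : θ * w ^ κ ≤ e / w * w ^ κ := le_trans (by gcongr) hM2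
    exact le_of_mul_le_mul_right h1 hwkpos
  have hsize : θ ^ (1 / κ) * w0 ≤ w := by
    have h1 : θ * w0 ^ κ ≤ w ^ κ := by
      rw [hed] at hM2
      refine hM2.trans ?_
      have : e / w ≤ 1 := by rw [div_le_one hwpos]; exact hele
      nlinarith
    have h2 := Real.rpow_le_rpow (by positivity) h1 (show 0 ≤ 1 / κ by positivity)
    rw [Real.mul_rpow hθ.le (by positivity), ← Real.rpow_mul hw0pos.le, ← Real.rpow_mul hwpos.le,
      mul_one_div_cancel hκ0.ne', Real.rpow_one, Real.rpow_one] at h2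
    exact h2
  have hsub : ∀ A' ⊆ X1, ∀ B' ⊆ Y1, edgeCt R A' B' ≤ e * ((#A' : ℝ) * #B' / w + κ) := by
    intro A' hA' B' hB'
    have hnn : 0 ≤ (#A' : ℝ) * #B' / w := by positivity
    by_cases hne : A'.Nonempty ∧ B'.Nonempty
    · have h1 := hmax (A', B') (by
        rw [hF]; exact ⟨⟨hA'.trans hX1, hne.1⟩, ⟨hB'.trans hY1, hne.2⟩⟩)
      simp only at h1
      rw [← hw, ← hedef] at h1
      have a0 : (0 : ℝ) < #A' := by exact_mod_cast hne.1.card_pos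
      have b0 : (0 : ℝ) < #B' := by exact_mod_cast hne.2.card_pos
      obtain ⟨v, hv⟩ : ∃ v : ℝ, v = (#A' : ℝ) * #B' := ⟨_, rfl⟩
      have hv0 : 0 < v := by rw [hv]; positivity
      rw [← hv] at h1 ⊢
      have h2 : edgeCt R A' B' ≤ e * (v / w) ^ (1 - κ) := by
        have h3 : v ^ (κ - 1) * v ^ (1 - κ) = 1 := by
          rw [← Real.rpow_add hv0]; simp
        have h4 : (v / w) ^ (1 - κ) = w ^ (κ - 1) * v ^ (1 - κ) := by
          rw [Real.div_rpow hv0.le hwpos.le, div_eq_mul_inv, ← Real.rpow_neg hwpos.le, neg_sub,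
            mul_comm]
        rw [h4, ← mul_assoc]
        calc edgeCt R A' B' = edgeCt R A' B' * v ^ (κ - 1) * v ^ (1 - κ) := by
              rw [mul_assoc, h3, mul_one]
          _ ≤ _ := by
              have : 0 < v ^ (1 - κ) := Real.rpow_pos_of_pos hv0 _
              gcongr
      refine h2.trans ?_
      gcongr
      exact rpow_le_add _ _ (by positivity) hκ0 hκ1
    · have : edgeCt R A' B' = 0 := by
        rw [not_and_or, Finset.not_nonempty_iff_eq_empty, Finset.not_nonempty_iff_eq_empty] at hne
        rcases hne with h | h <;> simp [edgeCt, h]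
      rw [this]
      positivity
  refine ⟨X1, hX1, Y1, hY1, hX1n, hY1n, ?_, ?_, ?_⟩
  · have h1 : θ ^ (1 / κ) * #X * #Y ≤ #X1 * #Y := by
      calc θ ^ (1 / κ) * #X * #Y = θ ^ (1 / κ) * w0 := by rw [hw0]; ring
        _ ≤ w := hsize
        _ = #X1 * #Y1 := hw
        _ ≤ #X1 * #Y := by gcongr
    exact le_of_mul_le_mul_right h1 y0
  · have h1 : θ ^ (1 / κ) * #Y * #X ≤ #Y1 * #X := by
      calc θ ^ (1 / κ) * #Y * #X = θ ^ (1 / κ) * w0 := by rw [hw0]; ring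
        _ ≤ w := hsize
        _ = #Y1 * #X1 := by rw [hw]; ring
        _ ≤ #Y1 * #X := by gcongr
    exact le_of_mul_le_mul_right h1 x0
  · intro X' hX' Y' hY' hxs hys
    have h1 := edgeCt_split R hX' hY'
    have h2 := hsub (X1 \ X') sdiff_subset Y1 Subset.rfl
    have h3 := hsub X' hX' (Y1 \ Y') sdiff_subset
    rw [card_sdiff_of_subset hX', Nat.cast_sub (card_le_card hX')] at h2
    rw [card_sdiff_of_subset hY', Nat.cast_sub (card_le_card hY')] at h3
    rw [← hedef] at h1
    obtain ⟨ρ, hρ⟩ : ∃ ρ : ℝ, ρ = (#X' : ℝ) * #Y' / w := ⟨_, rfl⟩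
    have h4 : ((#X1 : ℝ) - #X') * #Y1 / w + (#X' : ℝ) * (#Y1 - #Y') / w = 1 - ρ := by
      rw [hρ, hw]; field_simp; ring
    have h5 : e * (ρ - 2 * κ) ≤ edgeCt R X' Y' := by
      have : ρ = 1 - (((#X1 : ℝ) - #X') * #Y1 / w + (#X' : ℝ) * (#Y1 - #Y') / w) := by
        rw [h4]; ring
      rw [this]
      linarith
    have h6 : μ ^ 2 ≤ ρ := by
      rw [hρ, le_div_iff₀ hwpos, hw]
      calc μ ^ 2 * ((#X1 : ℝ) * #Y1) = (μ * #X1) * (μ * #Y1) := by ring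
        _ ≤ _ := by gcongr
    have h7 : ρ * (1 - ε) ≤ ρ - 2 * κ := by
      have := mul_le_mul_of_nonneg_left h6 hε.le
      rw [hκ]; linarith
    have h8 : (#X' : ℝ) * #Y' = ρ * w := by rw [hρ]; field_simp
    have hρ0 : 0 ≤ ρ := le_trans (by positivity) h6
    rw [h8]
    calc θ * (1 - ε) * (ρ * w) ≤ (e / w) * (1 - ε) * (ρ * w) := by
          have : 0 ≤ 1 - ε := by linarith
          gcongr
      _ = e * (ρ * (1 - ε)) := by field_simp
      _ ≤ e * (ρ - 2 * κ) := by gcongr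
      _ ≤ _ := h5

/-- Densest colour. -/
lemma densest_colour {A B : Type} (r : ℕ) (hr : 1 ≤ r) (C : A → B → Fin r) (X : Finset A)
    (Y : Finset B) : ∃ c : Fin r, (1 / (r : ℝ)) * ((#X : ℝ) * #Y) ≤
      edgeCt (fun x y => C x y = c) X Y := by
  classical
  have hr0 : (0 : ℝ) < r := by exact_mod_cast hr
  have hsum : ∑ c : Fin r, edgeCt (fun x y => C x y = c) X Y = (#X : ℝ) * #Y := by
    unfold edgeCt
    rw [Finset.sum_comm]
    calc _ = ∑ x ∈ X, (#Y : ℝ) := Finset.sum_congr rfl fun x _ => by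
          rw [Finset.sum_comm]
          calc _ = ∑ y ∈ Y, (1 : ℝ) := Finset.sum_congr rfl fun y _ => by
                rw [Finset.sum_eq_single (C x y)]
                · simp
                · intro c _ hc
                  exact if_neg (fun h => hc h.symm)
                · simp
            _ = _ := by simp
      _ = _ := by simp
  by_contra hcon
  push Not at hcon
  have hne : (univ : Finset (Fin r)).Nonempty := ⟨⟨0, hr⟩, mem_univ _⟩
  have := Finset.sum_lt_sum_of_nonempty hne fun c _ => hcon c
  rw [hsum] at this
  simp at this
  field_simp at this
  exact lt_irrefl _ this

lemma lowreg_all {V : Type} [DecidableEq V] (r : ℕ) (hr : 1 ≤ r) (ε : ℝ) (hε : 0 < ε)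
    (hε1 : ε ≤ 1) (E : Finset (Sym2 V)) : ∀ μ : ℝ, 0 < μ → μ ≤ 1 → ∃ l : ℝ, 0 < l ∧
      ∀ n : ℕ, 0 < n → ∀ C : Sym2 (V × Fin n) → Fin r,
      ∃ (X : V → Finset (Fin n)) (c : Sym2 V → Fin r), (∀ v, l * n ≤ #(X v)) ∧
        ∀ u v, u ≠ v → s(u, v) ∈ E →
          LowReg (fun x y => C s((u, x), (v, y)) = c s(u, v)) μ (1 / (r : ℝ) * (1 - ε))
            (X u) (X v) := by
  classical
  have hr0 : (0 : ℝ) < r := by exact_mod_cast hr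
  have hr1 : (1 : ℝ) ≤ r := by exact_mod_cast hr
  induction E using Finset.induction_on with
  | empty =>
    intro μ _ _
    exact ⟨1, one_pos, fun n _ C => ⟨fun _ => univ, fun _ => ⟨0, hr⟩, by simp, by simp⟩⟩
  | insert e E heE ih =>
    intro μ hμ hμ1
    induction e using Sym2.ind with
    | _ a b =>
    by_cases hab : a = b
    · obtain ⟨l, hl, h⟩ := ih μ hμ hμ1
      refine ⟨l, hl, fun n hn C => ?_⟩
      obtain ⟨X, c, h1, h2⟩ := h n hn C
      refine ⟨X, c, h1, fun u v huv he => ?_⟩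
      rcases Finset.mem_insert.mp he with he | he
      · rw [Sym2.eq_iff] at he
        subst hab
        rcases he with ⟨h, h'⟩ | ⟨h, h'⟩ <;> exact absurd (h.trans h'.symm) huv
      · exact h2 u v huv he
    obtain ⟨κ, hκ⟩ : ∃ κ : ℝ, κ = ε * μ ^ 2 / 2 := ⟨_, rfl⟩
    have hκ0 : 0 < κ := by rw [hκ]; positivity
    obtain ⟨l2, hl2⟩ : ∃ l2 : ℝ, l2 = (1 / (r : ℝ)) ^ (1 / κ) := ⟨_, rfl⟩
    have hl20 : 0 < l2 := by rw [hl2]; exact Real.rpow_pos_of_pos (by positivity) _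
    have hl21 : l2 ≤ 1 := by
      rw [hl2]
      apply Real.rpow_le_one (by positivity) _ (by positivity)
      rw [div_le_one hr0]; exact hr1
    obtain ⟨l, hl, h⟩ := ih (μ * l2) (by positivity) (by nlinarith)
    refine ⟨l * l2, by positivity, fun n hn C => ?_⟩
    obtain ⟨X, c, h1, h2⟩ := h n hn C
    have hn0 : (0 : ℝ) < n := by exact_mod_cast hn
    have hne : ∀ v, (X v).Nonempty := fun v => by
      rw [← Finset.card_pos]
      have : (0 : ℝ) < #(X v) := lt_of_lt_of_le (by positivity) (h1 v)
      exact_mod_cast this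
    obtain ⟨c1, hc1⟩ := densest_colour r hr (fun x y => C s((a, x), (b, y))) (X a) (X b)
    obtain ⟨Xa, hXa, Xb, hXb, -, -, hXal, hXbl, hLR⟩ := lowreg_pair _ (X a) (X b) (hne a) (hne b)
      (1 / (r : ℝ)) ε μ κ (by positivity) hε hε1 hμ hμ1 hκ hc1
    rw [← hl2] at hXal hXbl
    let X' : V → Finset (Fin n) := fun v => if v = a then Xa else if v = b then Xb else X v
    have hX'a : X' a = Xa := by simp [X']
    have hX'b : X' b = Xb := by simp [X', Ne.symm hab]
    have hX's : ∀ v, X' v ⊆ X v ∧ l2 * #(X v) ≤ #(X' v) := by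
      intro v
      by_cases hva : v = a
      · subst hva; rw [hX'a]; exact ⟨hXa, hXal⟩
      · by_cases hvb : v = b
        · subst hvb; rw [hX'b]; exact ⟨hXb, hXbl⟩
        · have : X' v = X v := by simp [X', hva, hvb]
          rw [this]
          refine ⟨Subset.rfl, ?_⟩
          have : (0 : ℝ) ≤ #(X v) := by positivity
          nlinarith
    refine ⟨X', Function.update c s(a, b) c1, ?_, ?_⟩
    · intro v
      calc l * l2 * n = l2 * (l * n) := by ring
        _ ≤ l2 * #(X v) := by gcongr; exact h1 v
        _ ≤ _ := (hX's v).2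
    · intro u v huv he
      by_cases hes : s(u, v) = s(a, b)
      · rw [hes, Function.update_self]
        rw [Sym2.eq_iff] at hes
        rcases hes with ⟨rfl, rfl⟩ | ⟨rfl, rfl⟩
        · rw [hX'a, hX'b]; exact hLR
        · rw [hX'a, hX'b]
          have := hLR.swap
          convert this using 4
          rw [Sym2.eq_swap]
      · rw [Function.update_of_ne hes]
        have he' : s(u, v) ∈ E := by
          rcases Finset.mem_insert.mp he with h | h
          · exact absurd h hes
          · exact h
        exact (h2 u v huv he').mono le_rfl hμ.le (hX's u).1 (hX's v).1 (hX's u).2 (hX's v).2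

lemma exists_enum {β : Type} (A : Finset β) (m : ℕ) (h : m ≤ #A) :
    ∃ f : Fin m → β, Function.Injective f ∧ ∀ i, f i ∈ A := by
  refine ⟨fun i => (A.equivFin.symm (Fin.castLE h i) : β), ?_, fun i => Subtype.coe_prop _⟩
  intro i j hij
  have := A.equivFin.symm.injective (Subtype.ext hij)
  exact Fin.castLE_injective h this

/-- The data for the embedding argument. -/
structure Cfg (α W : Type) [Fintype α] where
  H : SimpleGraph α
  R : α → α → W → W → Prop
  X : α → Finset W
  μ : ℝ
  δ : ℝ
  η : ℝ
  hsymm : ∀ a b x y, R a b x y → R b a y x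
  hne : ∀ a, (X a).Nonempty
  hδ : 0 < δ
  hδ1 : δ < 1
  hη : 0 < η
  hη1 : η < 1
  hμ1 : μ ≤ δ ^ Fintype.card α
  hμ2 : Fintype.card α * μ ≤ η * δ ^ Fintype.card α
  hμ0 : 0 < μ
  hLR : ∀ a b, H.Adj a b → LowReg (R a b) μ δ (X a) (X b)

namespace Cfg

variable {α W : Type} [Fintype α] [DecidableEq α] (K : Cfg α W)

open Classical in
noncomputable def Nb (S : Finset α) (x : α → W) (w : α) : Finset W :=
  (K.X w).filter (fun y => ∀ a ∈ S, K.H.Adj a w → K.R a w (x a) y)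

open Classical in
noncomputable def deg (S : Finset α) (w : α) : ℕ := #(S.filter (fun a => K.H.Adj a w))

def Good (S : Finset α) (x : α → W) : Prop :=
  (∀ a ∈ S, x a ∈ K.X a) ∧ ∀ w, w ∉ S → K.δ ^ K.deg S w * #(K.X w) ≤ #(K.Nb S x w)

open Classical in
noncomputable def ext (S : Finset α) (x : α → W) (w : α) : Finset W :=
  (K.Nb S x w).filter (fun y => K.Good (insert w S) (Function.update x w y))

lemma deg_le (S : Finset α) (w : α) : K.deg S w ≤ Fintype.card α := by
  classical
  exact (card_le_univ _)

lemma good_empty (x : α → W) : K.Good ∅ x := by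
  refine ⟨by simp, fun w _ => ?_⟩
  simp [Nb, deg]

lemma deg_insert_of_not {S : Finset α} {w w' : α} (h : ¬ K.H.Adj w w') :
    K.deg (insert w S) w' = K.deg S w' := by
  classical
  unfold deg
  rw [Finset.filter_insert, if_neg h]

lemma deg_insert_of {S : Finset α} {w w' : α} (hw : w ∉ S) (h : K.H.Adj w w') :
    K.deg (insert w S) w' = K.deg S w' + 1 := by
  classical
  unfold deg
  rw [Finset.filter_insert, if_pos h, card_insert_of_notMem]
  simp [hw]

open Classical in
lemma nb_insert {S : Finset α} {x : α → W} {w w' : α} (hw : w ∉ S) (y : W) :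
    K.Nb (insert w S) (Function.update x w y) w' =
      (K.Nb S x w').filter (fun z => K.H.Adj w w' → K.R w w' y z) := by
  ext z
  simp only [Nb, mem_filter, mem_insert, forall_eq_or_imp, Function.update_self]
  have : (∀ a ∈ S, K.H.Adj a w' → K.R a w' (Function.update x w y a) z) ↔
      ∀ a ∈ S, K.H.Adj a w' → K.R a w' (x a) z := by
    refine forall₂_congr fun a ha => ?_
    rw [Function.update_of_ne (by rintro rfl; exact hw ha)]
  rw [this]
  tauto

lemma ext_card {S : Finset α} {x : α → W} (hG : K.Good S x) {w : α} (hw : w ∉ S) :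
    K.δ ^ K.deg S w * (1 - K.η) * #(K.X w) ≤ #(K.ext S x w) := by
  classical
  have hδ := K.hδ
  have hδ1 := K.hδ1
  have hμ0 := K.hμ0
  let Bad : α → Finset W := fun w' => (K.X w).filter (fun y =>
    K.H.Adj w w' ∧ (#((K.Nb S x w').filter (fun z => K.R w w' y z)) : ℝ) < K.δ * #(K.Nb S x w'))
  have hx0 : (0 : ℝ) < #(K.X w) := by exact_mod_cast (K.hne w).card_pos
  have hBad : ∀ w', w' ∉ S → (#(Bad w') : ℝ) ≤ K.μ * #(K.X w) := by
    intro w' hw'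
    by_contra hcon
    push Not at hcon
    have hne : (Bad w').Nonempty := by
      rw [← Finset.card_pos]
      have : (0 : ℝ) < #(Bad w') := lt_of_le_of_lt (by positivity) hcon
      exact_mod_cast this
    have hadj : K.H.Adj w w' := by
      obtain ⟨y, hy⟩ := hne
      exact (mem_filter.mp hy).2.1
    have h1 := K.hLR w w' hadj (Bad w') (filter_subset _ _) (K.Nb S x w') (filter_subset _ _)
      hcon.le (by
        refine le_trans ?_ (hG.2 w' hw')
        gcongr
        exact K.hμ1.trans (pow_le_pow_of_le_one hδ.le hδ1.le (K.deg_le _ _)))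
    rw [edgeCt_eq_filter] at h1
    have h2 : ∑ y ∈ Bad w', (#((K.Nb S x w').filter (K.R w w' y)) : ℝ) <
        ∑ y ∈ Bad w', K.δ * #(K.Nb S x w') :=
      Finset.sum_lt_sum_of_nonempty hne fun y hy => (mem_filter.mp hy).2.2
    rw [sum_const, nsmul_eq_mul] at h2
    linarith
  have hsub : K.Nb S x w \ K.ext S x w ⊆ (univ.filter (fun w' => w' ∉ S)).biUnion Bad := by
    intro y hy
    rw [mem_sdiff] at hy
    obtain ⟨hy1, hy2⟩ := hy
    have hyX : y ∈ K.X w := (mem_filter.mp hy1).1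
    have hng : ¬ K.Good (insert w S) (Function.update x w y) := fun h =>
      hy2 (mem_filter.mpr ⟨hy1, h⟩)
    unfold Good at hng
    rw [not_and] at hng
    have h1 := hng (by
      intro a ha
      rcases mem_insert.mp ha with rfl | ha'
      · simpa using hyX
      · rw [Function.update_of_ne (by rintro rfl; exact hw ha')]; exact hG.1 a ha')
    push Not at h1
    obtain ⟨w', hw', h2⟩ := h1
    have hw'S : w' ∉ S := fun h => hw' (mem_insert_of_mem h)
    rw [K.nb_insert hw] at h2
    have h3 := hG.2 w' hw'S
    rw [mem_biUnion]
    refine ⟨w', by simp [hw'S], ?_⟩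
    by_cases hadj : K.H.Adj w w'
    · refine mem_filter.mpr ⟨hyX, hadj, ?_⟩
      rw [K.deg_insert_of hw hadj] at h2
      simp only [hadj, forall_true_left] at h2
      refine lt_of_lt_of_le h2 ?_
      rw [pow_succ]
      nlinarith
    · exfalso
      rw [K.deg_insert_of_not hadj] at h2
      simp only [hadj, IsEmpty.forall_iff, filter_true] at h2
      linarith
  have hcard : (#(K.Nb S x w \ K.ext S x w) : ℝ) ≤ Fintype.card α * (K.μ * #(K.X w)) := by
    have h1 : (#((univ.filter (fun w' => w' ∉ S)).biUnion Bad) : ℝ) ≤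
        ∑ w' ∈ univ.filter (fun w' => w' ∉ S), (#(Bad w') : ℝ) := by
      exact_mod_cast card_biUnion_le
    have h2 : ∑ w' ∈ univ.filter (fun w' => w' ∉ S), (#(Bad w') : ℝ) ≤
        ∑ w' ∈ univ.filter (fun w' => w' ∉ S), K.μ * #(K.X w) :=
      Finset.sum_le_sum fun w' hw' => hBad w' (mem_filter.mp hw').2
    rw [sum_const, nsmul_eq_mul] at h2
    have h3 : (#(univ.filter (fun w' => w' ∉ S)) : ℝ) ≤ Fintype.card α := by
      exact_mod_cast card_le_univ _
    calc (#(K.Nb S x w \ K.ext S x w) : ℝ) ≤ #((univ.filter (fun w' => w' ∉ S)).biUnion Bad) := by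
          exact_mod_cast card_le_card hsub
      _ ≤ _ := h1
      _ ≤ _ := h2
      _ ≤ _ := by gcongr
  have hext : (#(K.Nb S x w) : ℝ) = #(K.Nb S x w \ K.ext S x w) + #(K.ext S x w) := by
    have := card_sdiff_add_card_eq_card (s := K.ext S x w) (t := K.Nb S x w) (filter_subset _ _)
    exact_mod_cast this.symm
  have h4 := hG.2 w hw
  have h5 : K.δ ^ Fintype.card α ≤ K.δ ^ K.deg S w :=
    pow_le_pow_of_le_one hδ.le hδ1.le (K.deg_le _ _)
  have h6 : Fintype.card α * (K.μ * #(K.X w)) ≤ K.η * K.δ ^ K.deg S w * #(K.X w) := by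
    rw [← mul_assoc]
    have hη := K.hη
    have h7 : Fintype.card α * K.μ ≤ K.η * K.δ ^ K.deg S w := K.hμ2.trans (by gcongr)
    gcongr
  nlinarith

/-- A family of `m` tuples. -/
def Fam (S : Finset α) (m : ℕ) : Prop :=
  ∃ x : Fin m → α → W, (∀ s, K.Good S (x s)) ∧
    (∀ a ∈ S, Function.Injective (fun s => x s a)) ∧
    ∀ a ∈ S, ∀ b ∈ S, K.H.Adj a b → ∀ s s', K.R a b (x s a) (x s' b)

lemma fam_base (u v : α) (huv : K.H.Adj u v) (T : ℕ)
    (hk : ∀ M : W → W → Prop, K.δ * (1 - K.η) ^ 2 * ((#(K.X u) : ℝ) * #(K.X v)) ≤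
      edgeCt M (K.X u) (K.X v) →
      ∃ S ⊆ K.X u, ∃ S' ⊆ K.X v, #S = T ∧ #S' = T ∧ ∀ a ∈ S, ∀ b ∈ S', M a b) :
    K.Fam (insert v {u}) T := by
  classical
  have hδ := K.hδ
  have hη := K.hη
  have hη1 := K.hη1
  have huv' : v ≠ u := huv.ne'
  let x0 : α → W := fun a => (K.hne a).choose
  have h1 := K.ext_card (K.good_empty x0) (w := u) (by simp)
  have hd1 : K.deg ∅ u = 0 := by simp [deg]
  rw [hd1, pow_zero, one_mul] at h1
  have hins : insert u (∅ : Finset α) = {u} := rfl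
  have hd2 : K.deg {u} v = 1 := by
    rw [← hins, K.deg_insert_of (by simp) huv]
    simp [deg]
  have hG1 : ∀ y ∈ K.ext ∅ x0 u, K.Good {u} (Function.update x0 u y) := fun y hy =>
    (mem_filter.mp hy).2
  have h2 : ∀ y ∈ K.ext ∅ x0 u,
      K.δ * (1 - K.η) * #(K.X v) ≤ #(K.ext {u} (Function.update x0 u y) v) := by
    intro y hy
    have := K.ext_card (hG1 y hy) (w := v) (by simpa using huv')
    rwa [hd2, pow_one] at this
  have hsub1 : K.ext ∅ x0 u ⊆ K.X u := (filter_subset _ _).trans (filter_subset _ _)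
  have hsub2 : ∀ x, K.ext {u} x v ⊆ K.X v := fun x => (filter_subset _ _).trans (filter_subset _ _)
  obtain ⟨A, hA, B, hB, hAc, hBc, hAB⟩ := hk
    (fun y z => y ∈ K.ext ∅ x0 u ∧ z ∈ K.ext {u} (Function.update x0 u y) v) (by
      rw [edgeCt_eq_filter]
      have h3 : ∀ y ∈ K.ext ∅ x0 u, K.δ * (1 - K.η) * #(K.X v) ≤
          (#((K.X v).filter (fun z => y ∈ K.ext ∅ x0 u ∧
            z ∈ K.ext {u} (Function.update x0 u y) v)) : ℝ) := by
        intro y hy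
        refine (h2 y hy).trans ?_
        norm_cast
        apply card_le_card
        intro z hz
        exact mem_filter.mpr ⟨hsub2 _ hz, hy, hz⟩
      calc K.δ * (1 - K.η) ^ 2 * ((#(K.X u) : ℝ) * #(K.X v))
          = ((1 - K.η) * #(K.X u)) * (K.δ * (1 - K.η) * #(K.X v)) := by ring
        _ ≤ #(K.ext ∅ x0 u) * (K.δ * (1 - K.η) * #(K.X v)) := by
            have : 0 ≤ 1 - K.η := by linarith
            gcongr
        _ = ∑ y ∈ K.ext ∅ x0 u, K.δ * (1 - K.η) * #(K.X v) := by simp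
        _ ≤ ∑ y ∈ K.ext ∅ x0 u, (#((K.X v).filter (fun z => y ∈ K.ext ∅ x0 u ∧
            z ∈ K.ext {u} (Function.update x0 u y) v)) : ℝ) := Finset.sum_le_sum h3
        _ ≤ _ := by
            refine le_trans (Finset.sum_le_sum_of_subset_of_nonneg hsub1
              (fun _ _ _ => by positivity)) (le_of_eq ?_)
            refine Finset.sum_congr rfl fun y _ => ?_
            congr!)
  obtain ⟨f, hf, hfA⟩ := exists_enum A T hAc.ge
  obtain ⟨g, hg, hgB⟩ := exists_enum B T hBc.ge
  let x : Fin T → α → W := fun s => Function.update (Function.update x0 u (f s)) v (g s)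
  have hxu : ∀ s, x s u = f s := fun s => by simp [x, Function.update_of_ne huv'.symm]
  have hxv : ∀ s, x s v = g s := fun s => by simp [x]
  have hR : ∀ s s', K.R u v (f s) (g s') := by
    intro s s'
    have h3 := (hAB (f s) (hfA s) (g s') (hgB s')).2
    have h4 := (mem_filter.mp (mem_filter.mp h3).1).2 u (by simp) huv
    simpa using h4
  refine ⟨x, fun s => ?_, ?_, ?_⟩
  · exact (mem_filter.mp (hAB (f s) (hfA s) (g s) (hgB s)).2).2
  · intro a ha
    simp only [mem_insert, mem_singleton] at ha
    rcases ha with rfl | rfl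
    · simp only [hxv]; exact hg
    · simp only [hxu]; exact hf
  · intro a ha b hb hab s s'
    simp only [mem_insert, mem_singleton] at ha hb
    rcases ha with rfl | rfl <;> rcases hb with rfl | rfl
    · exact absurd hab (K.H.loopless.irrefl _)
    · rw [hxv, hxu]; exact K.hsymm _ _ _ _ (hR _ _)
    · rw [hxv, hxu]; exact hR _ _
    · exact absurd hab (K.H.loopless.irrefl _)

lemma fam_step {S : Finset α} {m : ℕ} (hm : 1 ≤ m) (hF : K.Fam S m) {w : α} (hw : w ∉ S)
    (hbig : (2 : ℝ) ^ m * m ≤ K.η * (K.δ ^ Fintype.card α * (1 - K.η)) * #(K.X w)) :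
    ∃ m' : ℕ, m' ≤ m ∧ (1 - K.η) ^ 2 * K.δ ^ K.deg S w * m ≤ m' ∧ K.Fam (insert w S) m' := by
  classical
  have hδ := K.hδ
  have hδ1 := K.hδ1
  have hη := K.hη
  have hη1 := K.hη1
  obtain ⟨x, hG, hinj, hR⟩ := hF
  have hm0 : (0 : ℝ) < m := by exact_mod_cast hm
  have hη0 : 0 < 1 - K.η := by linarith
  obtain ⟨d, hd⟩ : ∃ d : ℝ, d = K.δ ^ K.deg S w * (1 - K.η) := ⟨_, rfl⟩
  have hd0 : 0 < d := by rw [hd]; positivity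
  let D : W → Finset (Fin m) := fun y => univ.filter (fun s => y ∈ K.ext S (x s) w)
  have hsub : ∀ z, K.ext S z w ⊆ K.X w := fun x => (filter_subset _ _).trans (filter_subset _ _)
  have hsum : d * #(K.X w) * m ≤ ∑ y ∈ K.X w, (#(D y) : ℝ) := by
    have h1 : ∑ y ∈ K.X w, #(D y) = ∑ s : Fin m, #(K.ext S (x s) w) := by
      simp only [D, card_filter]
      rw [Finset.sum_comm]
      refine Finset.sum_congr rfl fun s _ => ?_
      rw [← card_filter]
      congr 1
      ext y
      simp only [mem_filter]
      exact ⟨fun h => h.2, fun h => ⟨hsub _ h, h⟩⟩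
    have h2 : ∑ y ∈ K.X w, (#(D y) : ℝ) = ∑ s : Fin m, (#(K.ext S (x s) w) : ℝ) := by
      exact_mod_cast h1
    rw [h2]
    calc d * #(K.X w) * m = ∑ s : Fin m, d * #(K.X w) := by simp; ring
      _ ≤ _ := Finset.sum_le_sum fun s _ => by
        rw [hd]; exact K.ext_card (hG s) hw
  let Y := (K.X w).filter (fun y => (1 - K.η) * d * m ≤ #(D y))
  have hYcard : K.η * d * #(K.X w) ≤ #Y := by
    have h1 : ∑ y ∈ K.X w, (#(D y) : ℝ) ≤
        ∑ y ∈ K.X w, ((if (1 - K.η) * d * m ≤ #(D y) then (m : ℝ) else 0) + (1 - K.η) * d * m) := by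
      refine Finset.sum_le_sum fun y _ => ?_
      split_ifs with h
      · have : (#(D y) : ℝ) ≤ m := by
          have := card_le_univ (D y)
          rw [Fintype.card_fin] at this
          exact_mod_cast this
        have : 0 ≤ (1 - K.η) * d * m := by positivity
        linarith
      · linarith
    rw [Finset.sum_add_distrib, ← Finset.sum_filter, sum_const, sum_const, nsmul_eq_mul,
      nsmul_eq_mul] at h1
    have h2 : K.η * d * #(K.X w) * m ≤ #Y * m := by
      have h3 := hsum.trans h1
      change _ ≤ (#Y : ℝ) * m + _ at h3
      nlinarith
    exact le_of_mul_le_mul_right h2 hm0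
  have hpig : 2 ^ m * m ≤ #Y := by
    have h1 : K.δ ^ Fintype.card α * (1 - K.η) ≤ d := by
      rw [hd]
      have := pow_le_pow_of_le_one hδ.le hδ1.le (K.deg_le S w)
      gcongr
    have h2 : (2 : ℝ) ^ m * m ≤ #Y := by
      refine hbig.trans (le_trans ?_ hYcard)
      gcongr
    exact_mod_cast h2
  obtain ⟨D0, -, hD0⟩ := Finset.exists_le_card_fiber_of_mul_le_card_of_maps_to
    (s := Y) (t := (univ : Finset (Fin m)).powerset) (f := D) (n := m)
    (fun y _ => by simp) ⟨∅, by simp⟩ (by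
      rw [card_powerset, card_univ, Fintype.card_fin]; exact hpig)
  obtain ⟨y0, hy0⟩ : (Y.filter (fun y => D y = D0)).Nonempty := by
    rw [← Finset.card_pos]; omega
  have hDm : #D0 ≤ m := by
    have := card_le_univ D0
    rwa [Fintype.card_fin] at this
  refine ⟨#D0, hDm, ?_, ?_⟩
  · rw [mem_filter, mem_filter] at hy0
    have h1 := hy0.1.2
    rw [hy0.2, hd] at h1
    refine le_trans (le_of_eq ?_) h1
    ring
  obtain ⟨f, hf, hfA⟩ := exists_enum D0 _ le_rfl
  obtain ⟨g, hg, hgB⟩ := exists_enum _ (#D0) (hDm.trans hD0)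
  have hext : ∀ s s', g s' ∈ K.ext S (x (f s)) w := by
    intro s s'
    have h1 := (mem_filter.mp (hgB s')).2
    have h2 : f s ∈ D (g s') := by rw [h1]; exact hfA s
    exact (mem_filter.mp h2).2
  have hupd : ∀ s, ∀ a ∈ S, Function.update (x (f s)) w (g s) a = x (f s) a := by
    intro s a ha
    rw [Function.update_of_ne (by rintro rfl; exact hw ha)]
  have hRw : ∀ a ∈ S, K.H.Adj a w → ∀ s s', K.R a w (x (f s) a) (g s') := by
    intro a ha haw s s'
    exact (mem_filter.mp (mem_filter.mp (hext s s')).1).2 a ha haw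
  refine ⟨fun s => Function.update (x (f s)) w (g s), fun s => ?_, ?_, ?_⟩
  · exact (mem_filter.mp (hext s s)).2
  · intro a ha
    rcases mem_insert.mp ha with rfl | ha
    · simpa using hg
    · simp only [hupd _ a ha]
      exact (hinj a ha).comp hf
  · intro a ha b hb hab s s'
    rcases mem_insert.mp ha with rfl | ha' <;> rcases mem_insert.mp hb with rfl | hb'
    · exact absurd hab (K.H.loopless.irrefl _)
    · simp only [Function.update_self, hupd _ b hb']
      exact K.hsymm _ _ _ _ (hRw b hb' hab.symm _ _)
    · simp only [Function.update_self, hupd _ a ha']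
      exact hRw a ha' hab _ _
    · simp only [hupd _ a ha', hupd _ b hb']
      exact hR a ha' b hb' hab _ _

open Classical in
/-- Edges inside a set. -/
noncomputable def eIn (S : Finset α) : Finset (Sym2 α) :=
  K.H.edgeFinset.filter (fun e => ∀ v ∈ e, v ∈ S)

lemma eIn_insert {S : Finset α} {w : α} (hw : w ∉ S) :
    #(K.eIn S) + K.deg S w ≤ #(K.eIn (insert w S)) := by
  classical
  have h1 : K.deg S w = #((S.filter (fun a => K.H.Adj a w)).image (fun a => s(a, w))) := by
    rw [card_image_of_injective]
    · unfold deg; congr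
    · intro a b hab
      simp only [Sym2.eq_iff] at hab
      rcases hab with h | h
      · exact h.1
      · exact h.1.trans h.2
  rw [h1, ← card_union_of_disjoint]
  · apply card_le_card
    intro e he
    rw [mem_union] at he
    rcases he with he | he
    · simp only [eIn, mem_filter] at he ⊢
      exact ⟨he.1, fun v hv => mem_insert_of_mem (he.2 v hv)⟩
    · rw [mem_image] at he
      obtain ⟨a, ha, rfl⟩ := he
      rw [mem_filter] at ha
      simp only [eIn, mem_filter, SimpleGraph.mem_edgeFinset, SimpleGraph.mem_edgeSet]
      refine ⟨ha.2, fun v hv => ?_⟩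
      rcases Sym2.mem_iff.mp hv with rfl | rfl
      · exact mem_insert_of_mem ha.1
      · exact mem_insert_self _ _
  · rw [Finset.disjoint_left]
    intro e he he2
    rw [mem_image] at he2
    obtain ⟨a, ha, rfl⟩ := he2
    simp only [eIn, mem_filter] at he
    exact hw (he.2 w (Sym2.mem_mk_right _ _))

lemma fam_all (u v : α) (huv : K.H.Adj u v) (T : ℕ) (hT : 1 ≤ T)
    (hk : ∀ M : W → W → Prop, K.δ * (1 - K.η) ^ 2 * ((#(K.X u) : ℝ) * #(K.X v)) ≤
      edgeCt M (K.X u) (K.X v) →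
      ∃ S ⊆ K.X u, ∃ S' ⊆ K.X v, #S = T ∧ #S' = T ∧ ∀ a ∈ S, ∀ b ∈ S', M a b)
    (hbig : ∀ w, (2 : ℝ) ^ T * T ≤ K.η * (K.δ ^ Fintype.card α * (1 - K.η)) * #(K.X w)) :
    ∃ m : ℕ, K.δ ^ Nat.card K.H.edgeSet * ((1 - K.η) ^ 2) ^ Fintype.card α * T ≤ K.δ * m ∧
      K.Fam univ m := by
  classical
  have hδ := K.hδ
  have hδ1 := K.hδ1
  have hη := K.hη
  have hη1 := K.hη1
  have hη0 : 0 < 1 - K.η := by linarith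
  have hT0 : (0 : ℝ) < T := by exact_mod_cast hT
  obtain ⟨ζ, hζ⟩ : ∃ ζ : ℝ, ζ = (1 - K.η) ^ 2 := ⟨_, rfl⟩
  have hζ0 : 0 < ζ := by rw [hζ]; positivity
  have hζ1 : ζ ≤ 1 := by rw [hζ]; exact pow_le_one₀ hη0.le (by linarith)
  rw [← hζ]
  have key : ∀ U : Finset α, ∃ m : ℕ, m ≤ T ∧ 1 ≤ m ∧
      K.δ ^ #(K.eIn (insert v {u} ∪ U)) * ζ ^ #(insert v {u} ∪ U) * T ≤ K.δ * m ∧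
      K.Fam (insert v {u} ∪ U) m := by
    intro U
    induction U using Finset.induction_on with
    | empty =>
      refine ⟨T, le_rfl, hT, ?_, ?_⟩
      · have h1 : 1 ≤ #(K.eIn (insert v {u} ∪ ∅)) := by
          rw [Nat.one_le_iff_ne_zero, ← Nat.pos_iff_ne_zero, Finset.card_pos]
          refine ⟨s(u, v), ?_⟩
          simp only [eIn, mem_filter, SimpleGraph.mem_edgeFinset, SimpleGraph.mem_edgeSet]
          refine ⟨huv, fun a ha => ?_⟩
          rcases Sym2.mem_iff.mp ha with rfl | rfl <;> simp
        have h2 : K.δ ^ #(K.eIn (insert v {u} ∪ ∅)) ≤ K.δ := by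
          calc _ ≤ K.δ ^ 1 := pow_le_pow_of_le_one hδ.le hδ1.le h1
            _ = _ := pow_one _
        have h3 : ζ ^ #((insert v {u} : Finset α) ∪ ∅) ≤ 1 := pow_le_one₀ hζ0.le hζ1
        calc _ ≤ K.δ * 1 * T := by gcongr
          _ = _ := by ring
      · rw [union_empty]; exact K.fam_base u v huv T hk
    | insert w U hwU ih =>
      obtain ⟨m, hmT, hm1, hinv, hF⟩ := ih
      by_cases hw : w ∈ insert v {u} ∪ U
      · have : insert v {u} ∪ insert w U = insert v {u} ∪ U := by
          rw [union_insert]; exact insert_eq_of_mem hw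
        rw [this]
        exact ⟨m, hmT, hm1, hinv, hF⟩
      · rw [union_insert]
        obtain ⟨S, hS⟩ : ∃ S : Finset α, S = insert v {u} ∪ U := ⟨_, rfl⟩
        rw [← hS] at hw hinv hF ⊢
        have hm0 : (0 : ℝ) < m := by exact_mod_cast hm1
        obtain ⟨m', hm'm, hm', hF'⟩ := K.fam_step hm1 hF hw (by
          refine le_trans ?_ (hbig w)
          have : (m : ℝ) ≤ T := by exact_mod_cast hmT
          have h2 : (2 : ℝ) ^ m ≤ 2 ^ T := pow_le_pow_right₀ (by norm_num) hmT
          gcongr)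
        rw [← hζ] at hm'
        refine ⟨m', hm'm.trans hmT, ?_, ?_, hF'⟩
        · have : (0 : ℝ) < m' := lt_of_lt_of_le (by positivity) hm'
          exact_mod_cast this
        · rw [card_insert_of_notMem hw]
          have h1 := pow_le_pow_of_le_one hδ.le hδ1.le (K.eIn_insert hw)
          calc K.δ ^ #(K.eIn (insert w S)) * ζ ^ (#S + 1) * T
              ≤ K.δ ^ (#(K.eIn S) + K.deg S w) * ζ ^ (#S + 1) * T := by gcongr
            _ = (K.δ ^ #(K.eIn S) * ζ ^ #S * T) * (ζ * K.δ ^ K.deg S w) := by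
                rw [pow_add, pow_succ]; ring
            _ ≤ K.δ * m * (ζ * K.δ ^ K.deg S w) := by gcongr
            _ = K.δ * (ζ * K.δ ^ K.deg S w * m) := by ring
            _ ≤ _ := by gcongr
  obtain ⟨m, -, -, h1, h2⟩ := key univ
  rw [Finset.union_eq_right.mpr (subset_univ _)] at h1 h2
  refine ⟨m, ?_, h2⟩
  have h3 : K.eIn univ = K.H.edgeFinset := by simp [eIn]
  rw [h3, card_univ] at h1
  rw [Nat.card_eq_fintype_card, ← SimpleGraph.edgeFinset_card]
  exact h1

end Cfg

lemma eta_exists (r : ℕ) (hr : 2 ≤ r) (γ : ℝ) (hγ : 0 < γ) (k h : ℕ) (hk : k ≠ 0) :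
    ∃ η : ℝ, 0 < η ∧ η < 1 ∧
      ((1 / (r : ℝ) * (1 - η) * (1 - η) ^ 2)⁻¹) ^
        (1 / ((1 / (r : ℝ) * (1 - η)) ^ k * ((1 - η) ^ 2) ^ h)) ≤
      (r : ℝ) ^ (((r : ℝ) + γ) ^ k) := by
  have hr1 : (1 : ℝ) < r := by exact_mod_cast (by omega : 1 < r)
  have hr0 : (0 : ℝ) < r := by linarith
  have hcont : ContinuousAt (fun η : ℝ => ((1 / (r : ℝ) * (1 - η) * (1 - η) ^ 2)⁻¹) ^
        (1 / ((1 / (r : ℝ) * (1 - η)) ^ k * ((1 - η) ^ 2) ^ h))) 0 := by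
    apply ContinuousAt.rpow
    · apply ContinuousAt.inv₀
      · fun_prop
      · simp; omega
    · apply ContinuousAt.div
      · fun_prop
      · fun_prop
      · simp; omega
    · left; simp; omega
  have h0 : (fun η : ℝ => ((1 / (r : ℝ) * (1 - η) * (1 - η) ^ 2)⁻¹) ^
        (1 / ((1 / (r : ℝ) * (1 - η)) ^ k * ((1 - η) ^ 2) ^ h))) 0 <
      (r : ℝ) ^ (((r : ℝ) + γ) ^ k) := by
    simp only [sub_zero, mul_one, one_pow, one_div, inv_inv, inv_pow]
    apply Real.rpow_lt_rpow_of_exponent_lt hr1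
    exact pow_lt_pow_left₀ (by linarith) hr0.le hk
  have hev := hcont.eventually_lt_const h0
  have hev2 := (hev.filter_mono (nhdsWithin_le_nhds (s := Set.Ioi 0))).and
    (Ioo_mem_nhdsGT (show (0 : ℝ) < 1 by norm_num))
  obtain ⟨η, h1, h2⟩ := hev2.exists
  exact ⟨η, h2.1, h2.2, h1.le⟩

lemma case_one (r : ℕ) (hr : 2 ≤ r) (α V : Type) [Fintype α] [Fintype V]
    (H : SimpleGraph α) (G : SimpleGraph V) (hH : ∃ x y, H.Adj x y) (hG : ArrowsFor G H r)
    (hcard : Nat.card H.edgeSet ≤ 1) :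
    ∃ a : ℝ, 0 < a ∧ ∀ t : ℕ, 1 ≤ t → ∃ n : ℕ, (n : ℝ) ≤ a * (r : ℝ) ^ t ∧
      BlowupArrow G H r n t := by
  classical
  have hr1 : (1 : ℝ) < r := by exact_mod_cast (by omega : 1 < r)
  have hr0 : (0 : ℝ) < r := by linarith
  obtain ⟨u, v, huv⟩ := hH
  obtain ⟨f, c0, hf, hfG⟩ := hG (fun _ => ⟨0, by omega⟩)
  obtain ⟨a, ha, hk⟩ := sharp_kst (1 / (r : ℝ)) (by positivity) (by
    rw [div_lt_one hr0]; exact hr1)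
  have hsub : Subsingleton H.edgeSet := Finite.card_le_one_iff_subsingleton.mp hcard
  have huniq : ∀ x y, H.Adj x y → s(x, y) = s(u, v) := by
    intro x y hxy
    have := hsub.elim ⟨s(x, y), hxy⟩ ⟨s(u, v), huv⟩
    exact congrArg Subtype.val this
  refine ⟨a + 1, by positivity, fun t ht => ⟨⌈a * (r : ℝ) ^ t⌉₊, ?_, ?_⟩⟩
  · have h1 := (Nat.ceil_lt_add_one (show 0 ≤ a * (r : ℝ) ^ t by positivity)).le
    have h2 : 1 ≤ (r : ℝ) ^ t := one_le_pow₀ hr1.le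
    linarith
  · obtain ⟨n, hn⟩ : ∃ n : ℕ, n = ⌈a * (r : ℝ) ^ t⌉₊ := ⟨_, rfl⟩
    have hnle : a * (r : ℝ) ^ t ≤ n := by rw [hn]; exact Nat.le_ceil _
    rw [← hn]
    intro C
    obtain ⟨c, hc⟩ := densest_colour r (by omega) (fun x y => C s((f u, x), (f v, y)))
      (univ : Finset (Fin n)) univ
    obtain ⟨S, -, T, -, hSc, hTc, hST⟩ := hk t ht _ _ _ univ univ (by simpa using hnle)
      (by simpa using hnle) hc
    have htn : t ≤ n := by
      rw [← hSc]; simpa using card_le_univ S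
    obtain ⟨g, hg, hgS⟩ := exists_enum S t hSc.ge
    obtain ⟨g', hg', hgT⟩ := exists_enum T t hTc.ge
    let ψ : α → Fin t → Fin n := fun a => if a = u then g else if a = v then g' else Fin.castLE htn
    have hψu : ψ u = g := by simp [ψ]
    have hψv : ψ v = g' := by simp [ψ, huv.ne']
    refine ⟨f, ψ, c, hf, ?_, ?_⟩
    · intro a
      simp only [ψ]
      split_ifs
      · exact hg
      · exact hg'
      · exact Fin.castLE_injective _
    · intro x y hxy
      refine ⟨(hfG x y hxy).1, fun i j => ?_⟩
      rcases Sym2.eq_iff.mp (huniq x y hxy) with ⟨rfl, rfl⟩ | ⟨rfl, rfl⟩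
      · rw [hψu, hψv]; exact hST _ (hgS i) _ (hgT j)
      · rw [hψu, hψv, Sym2.eq_swap]; exact hST _ (hgS j) _ (hgT i)

lemma case_two (r : ℕ) (hr : 2 ≤ r) (γ : ℝ) (hγ : 0 < γ) (α V : Type) [Fintype α] [Fintype V]
    (H : SimpleGraph α) (G : SimpleGraph V) (hH : ∃ x y, H.Adj x y) (hG : ArrowsFor G H r)
    (hcard : 1 < Nat.card H.edgeSet) :
    ∃ a : ℝ, 0 < a ∧ ∀ t : ℕ, 1 ≤ t → ∃ n : ℕ,
      (n : ℝ) ≤ a * ((r : ℝ) ^ (((r : ℝ) + γ) ^ (Nat.card H.edgeSet - 1))) ^ t ∧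
      BlowupArrow G H r n t := by
  classical
  have hr2 : (2 : ℝ) ≤ r := by exact_mod_cast hr
  have hr1 : (1 : ℝ) < r := by linarith
  have hr0 : (0 : ℝ) < r := by linarith
  obtain ⟨u, v, huv⟩ := hH
  obtain ⟨k, hkdef⟩ : ∃ k, k = Nat.card H.edgeSet - 1 := ⟨_, rfl⟩
  have hk0 : k ≠ 0 := by omega
  have hek : Nat.card H.edgeSet = k + 1 := by omega
  obtain ⟨h, hh⟩ : ∃ h, h = Fintype.card α := ⟨_, rfl⟩
  obtain ⟨η, hη0, hη1, hηb⟩ := eta_exists r hr γ hγ k h hk0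
  rw [← hkdef]
  obtain ⟨b, hb⟩ : ∃ b : ℝ, b = (r : ℝ) ^ (((r : ℝ) + γ) ^ k) := ⟨_, rfl⟩
  rw [← hb] at hηb ⊢
  have hη1' : 0 < 1 - η := by linarith
  obtain ⟨δ, hδ⟩ : ∃ δ : ℝ, δ = 1 / (r : ℝ) * (1 - η) := ⟨_, rfl⟩
  obtain ⟨p, hp⟩ : ∃ p : ℝ, p = δ * (1 - η) ^ 2 := ⟨_, rfl⟩
  obtain ⟨Θ, hΘ⟩ : ∃ Θ : ℝ, Θ = 1 / (δ ^ k * ((1 - η) ^ 2) ^ h) := ⟨_, rfl⟩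
  rw [← hδ, ← hp, ← hΘ] at hηb
  have hδ0 : 0 < δ := by rw [hδ]; positivity
  have hδhalf : δ < 1 / 2 := by
    rw [hδ]
    have : 1 / (r : ℝ) ≤ 1 / 2 := one_div_le_one_div_of_le (by norm_num) hr2
    have h1 : 0 < 1 / (r : ℝ) := by positivity
    nlinarith
  have hδ1 : δ < 1 := by linarith
  have hp0 : 0 < p := by rw [hp]; positivity
  have hphalf : p < 1 / 2 := by
    have : (1 - η) ^ 2 ≤ 1 := pow_le_one₀ hη1'.le (by linarith)
    rw [hp]; nlinarith
  have hp1 : p < 1 := by linarith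
  have hΘ0 : 0 < Θ := by rw [hΘ]; positivity
  obtain ⟨μ, hμ⟩ : ∃ μ : ℝ, μ = η * δ ^ h / (h + 1) := ⟨_, rfl⟩
  have hμ0 : 0 < μ := by rw [hμ]; positivity
  have hμh : (h + 1) * μ = η * δ ^ h := by rw [hμ]; field_simp
  have hδh : 0 < δ ^ h := by positivity
  have hh0 : (0 : ℝ) ≤ h := by positivity
  have hμ1 : μ ≤ δ ^ h := by nlinarith
  have hμ2 : h * μ ≤ η * δ ^ h := by nlinarith
  have hμ3 : μ ≤ 1 := hμ1.trans (pow_le_one₀ hδ0.le hδ1.le)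
  obtain ⟨l, hl, hreg⟩ := lowreg_all (V := V) r (by omega) η hη0 hη1.le univ μ hμ0 hμ3
  rw [← hδ] at hreg
  obtain ⟨a0, ha0, hkst⟩ := sharp_kst p hp0 hp1
  obtain ⟨C2, hC2⟩ : ∃ C2 : ℝ, ∀ T : ℕ, (T : ℝ) * (2 * p) ^ T ≤ C2 := by
    obtain ⟨C, hC⟩ := (tendsto_pow_const_mul_const_pow_of_abs_lt_one 1 (r := 2 * p) (by
      rw [abs_of_pos (by positivity)]; linarith)).bddAbove_range
    refine ⟨C, fun t => ?_⟩
    have := hC ⟨t, rfl⟩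
    simpa using this
  have hC20 : 0 ≤ C2 := by have := hC2 0; simpa using this
  obtain ⟨c3, hc3⟩ : ∃ c3 : ℝ, c3 = η * (δ ^ h * (1 - η)) := ⟨_, rfl⟩
  have hc30 : 0 < c3 := by rw [hc3]; positivity
  obtain ⟨D, hD⟩ : ∃ D : ℝ, D = a0 + C2 / c3 := ⟨_, rfl⟩
  have hC2c3 : 0 ≤ C2 / c3 := by positivity
  have hD0 : 0 < D := by rw [hD]; positivity
  have hpinv : 1 ≤ p⁻¹ := (one_le_inv₀ hp0).mpr hp1.le
  refine ⟨(D / l + 1) * p⁻¹, by positivity, fun t ht => ?_⟩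
  have ht0 : (0 : ℝ) < t := by exact_mod_cast ht
  obtain ⟨T, hT⟩ : ∃ T : ℕ, T = ⌈Θ * t⌉₊ := ⟨_, rfl⟩
  have hTge : Θ * t ≤ T := by rw [hT]; exact Nat.le_ceil _
  have hTle : (T : ℝ) ≤ Θ * t + 1 := by
    rw [hT]; exact (Nat.ceil_lt_add_one (by positivity)).le
  have hT1 : 1 ≤ T := by
    have : (0 : ℝ) < T := lt_of_lt_of_le (by positivity) hTge
    exact_mod_cast this
  obtain ⟨Q, hQ⟩ : ∃ Q : ℝ, Q = p⁻¹ ^ T := ⟨_, rfl⟩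
  have hQ1 : 1 ≤ Q := by rw [hQ]; exact one_le_pow₀ hpinv
  have hQb : Q ≤ p⁻¹ * b ^ t := by
    rw [hQ, ← Real.rpow_natCast]
    calc p⁻¹ ^ (T : ℝ) ≤ p⁻¹ ^ (Θ * t + 1) := Real.rpow_le_rpow_of_exponent_le hpinv hTle
      _ = (p⁻¹ ^ Θ) ^ t * p⁻¹ := by
          rw [Real.rpow_add (by positivity), Real.rpow_one, Real.rpow_mul (by positivity),
            Real.rpow_natCast]
      _ ≤ b ^ t * p⁻¹ := by gcongr
      _ = _ := by ring
  have hTQ : (2 : ℝ) ^ T * T ≤ C2 * Q := by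
    have h1 := hC2 T
    have h2 : (2 * p) ^ T * Q = 2 ^ T := by
      rw [hQ, ← mul_pow, mul_assoc, mul_inv_cancel₀ hp0.ne', mul_one]
    calc (2 : ℝ) ^ T * T = (T * (2 * p) ^ T) * Q := by rw [← h2]; ring
      _ ≤ _ := by gcongr
  refine ⟨⌈D * Q / l⌉₊, ?_, ?_⟩
  · have h1 := (Nat.ceil_lt_add_one (show 0 ≤ D * Q / l by positivity)).le
    calc ((⌈D * Q / l⌉₊ : ℕ) : ℝ) ≤ D * Q / l + 1 := h1
      _ ≤ D * Q / l + Q := by gcongr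
      _ = (D / l + 1) * Q := by ring
      _ ≤ (D / l + 1) * (p⁻¹ * b ^ t) := by gcongr
      _ = _ := by ring
  obtain ⟨n, hn⟩ : ∃ n : ℕ, n = ⌈D * Q / l⌉₊ := ⟨_, rfl⟩
  have hnle : D * Q / l ≤ n := by rw [hn]; exact Nat.le_ceil _
  rw [← hn]
  have hn0 : 0 < n := by
    have : (0 : ℝ) < n := lt_of_lt_of_le (by positivity) hnle
    exact_mod_cast this
  intro C
  obtain ⟨X, c, hXl, hXreg⟩ := hreg n hn0 C
  have hXbig : ∀ w, D * Q ≤ #(X w) := fun w => by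
    refine le_trans ?_ (hXl w)
    rw [div_le_iff₀ hl] at hnle
    linarith
  obtain ⟨f, c0, hf, hfG⟩ := hG c
  let K : Cfg α (Fin n) :=
    { H := H
      R := fun a b x y => C s((f a, x), (f b, y)) = c0
      X := fun a => X (f a)
      μ := μ
      δ := δ
      η := η
      hsymm := fun a b x y hxy => by rw [Sym2.eq_swap]; exact hxy
      hne := fun a => by
        rw [← Finset.card_pos]
        have : (0 : ℝ) < #(X (f a)) := lt_of_lt_of_le (by positivity) (hXbig (f a))
        exact_mod_cast this
      hδ := hδ0
      hδ1 := hδ1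
      hη := hη0
      hη1 := hη1
      hμ1 := by rw [← hh]; exact hμ1
      hμ2 := by rw [← hh]; exact hμ2
      hμ0 := hμ0
      hLR := fun a b hab => by
        have h1 := hXreg (f a) (f b) (fun h => hab.ne (hf h)) (mem_univ _)
        rw [(hfG a b hab).2] at h1
        exact h1 }
  have hXa0 : ∀ w, a0 * p⁻¹ ^ T ≤ #(X w) := fun w => by
    refine le_trans ?_ (hXbig w)
    rw [← hQ, hD]
    have : 0 ≤ C2 / c3 * Q := by positivity
    linarith
  obtain ⟨m, hm, hFam⟩ := K.fam_all u v huv T hT1 (by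
      intro M hM
      have hM' : p * ((#(X (f u)) : ℝ) * #(X (f v))) ≤ edgeCt M (X (f u)) (X (f v)) := by
        rw [hp]; exact hM
      exact hkst T hT1 _ _ M _ _ (hXa0 _) (hXa0 _) hM')
    (by
      intro w
      change (2 : ℝ) ^ T * T ≤ η * (δ ^ Fintype.card α * (1 - η)) * #(X (f w))
      rw [← hh, ← hc3]
      refine hTQ.trans ?_
      calc C2 * Q = c3 * (C2 / c3 * Q) := by field_simp
        _ ≤ c3 * (D * Q) := by
            have : C2 / c3 ≤ D := by rw [hD]; linarith
            gcongr
        _ ≤ _ := by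
            have := hXbig (f w)
            gcongr)
  change δ ^ Nat.card H.edgeSet * ((1 - η) ^ 2) ^ Fintype.card α * T ≤ δ * m at hm
  rw [hek, ← hh, pow_succ] at hm
  have htm : t ≤ m := by
    have h1 : δ ^ k * ((1 - η) ^ 2) ^ h * T ≤ m := by
      refine le_of_mul_le_mul_left ?_ hδ0
      linarith
    have h2 : δ ^ k * ((1 - η) ^ 2) ^ h * (Θ * t) = t := by
      rw [hΘ]; field_simp
    have h3 : (t : ℝ) ≤ m := by
      rw [← h2]
      refine le_trans ?_ h1
      gcongr
    exact_mod_cast h3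
  obtain ⟨x, -, hinj, hR⟩ := hFam
  refine ⟨f, fun a i => x (Fin.castLE htm i) a, c0, hf, fun a => ?_, fun a b hab => ?_⟩
  · exact (hinj a (mem_univ _)).comp (Fin.castLE_injective htm)
  · exact ⟨(hfG a b hab).1, fun i j => hR a (mem_univ _) b (mem_univ _) hab _ _⟩

end BlowupProof

/-- the "moreover" part of Theorem 1.2. For `γ > 0` sufficiently small with
respect to `r`, one may take `b = r^((r+γ)^(|E(H)|-1))` in the bound `B_r(G → H; t) ≤ a · b^t`,
for a constant `a = a(G,H,r,γ)`. -/
theorem blowup_ramsey_explicit_base (r : ℕ) (hr : 2 ≤ r) :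
    ∃ γ₀ : ℝ, 0 < γ₀ ∧ ∀ γ : ℝ, 0 < γ → γ ≤ γ₀ →
      ∀ (α V : Type) [Fintype α] [Fintype V] (H : SimpleGraph α) (G : SimpleGraph V),
        (∃ x y, H.Adj x y) → ArrowsFor G H r →
        ∃ a : ℝ, 0 < a ∧ ∀ t : ℕ, 1 ≤ t →
          ∃ n : ℕ,
            (n : ℝ) ≤ a * ((r : ℝ) ^ (((r : ℝ) + γ) ^ (Nat.card H.edgeSet - 1))) ^ t ∧
            BlowupArrow G H r n t := by
  refine ⟨1, one_pos, fun γ hγ _ α V _ _ H G hH hG => ?_⟩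
  rcases Nat.lt_or_ge 1 (Nat.card H.edgeSet) with h | h
  · exact case_two r hr γ hγ α V H G hH hG h
  · obtain ⟨a, ha, h1⟩ := case_one r hr α V H G hH hG h
    refine ⟨a, ha, fun t ht => ?_⟩
    obtain ⟨n, hn, h2⟩ := h1 t ht
    have h3 : Nat.card H.edgeSet - 1 = 0 := by omega
    refine ⟨n, ?_, h2⟩
    rw [h3, pow_zero, Real.rpow_one]
    exact hn
end
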